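/- arXiv:2304.02863 — 5 statements merged into one kernel-verified Lean document; each statement's English description precedes it below -/
import Mathlib

section
/- Let μ be a nonzero σ-finite measure on a measurable space X and let g : X × X → (0,∞) be jointly measurable with ∫_X g(u, x) dμ(x) = 1 for every u ∈ X. Write g⁻(x) := ∫_X g(y, x) dμ(y), and assume g⁻(x) < ∞ for μ-almost every x. Define h(u, v) := ∫_X g(u, x) g(v, x) / g⁻(x) dμ(x), where the integrand is interpreted as 0 on the null set where g⁻(x) = ∞. Then h is symmetric (h(u,v) = h(v,u)), h(u, v) > 0 for all u, v ∈ X, and ∫_X h(u, v) dμ(v) = 1 for every u ∈ X. -/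
open MeasureTheory ENNReal

theorem lintegral_pos_of_ae_ne_zero {α : Type*} [MeasurableSpace α] {μ : Measure α} (hμ : μ ≠ 0)
    {f : α → ℝ≥0∞} (hf : AEMeasurable f μ) (hpos : ∀ᵐ a ∂μ, f a ≠ 0) : 0 < ∫⁻ a, f a ∂μ := by
  have : (ae μ).NeBot := ae_neBot.mpr hμ
  rw [pos_iff_ne_zero, Ne, lintegral_eq_zero_iff' hf]
  intro hzero
  obtain ⟨a, ha, ha'⟩ := (hpos.and hzero).exists
  exact ha ha'

section Kernel

variable {X Y : Type*} [MeasurableSpace X]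

/-- The column mass `g⁻(y) = ∫ g(x, y) dμ(x)` of a nonnegative kernel `g`: its total mass in the
first variable, by which `symmetrizedKernel` is normalized. -/
noncomputable def columnMass (μ : Measure X) (g : X → Y → ℝ≥0∞) (y : Y) : ℝ≥0∞ :=
  ∫⁻ x, g x y ∂μ

variable {μ : Measure X} {g : X → Y → ℝ≥0∞}

theorem columnMass_pos (hμ : μ ≠ 0) {y : Y} (hgy : AEMeasurable (g · y) μ)
    (hpos : ∀ᵐ x ∂μ, g x y ≠ 0) : 0 < columnMass μ g y :=
  lintegral_pos_of_ae_ne_zero hμ hgy hpos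

theorem lintegral_mul_div_columnMass {y : Y} (hgy : AEMeasurable (g · y) μ)
    (hzero : columnMass μ g y ≠ 0) (hfin : columnMass μ g y ≠ ∞) (c : ℝ≥0∞) :
    ∫⁻ v, c * g v y / columnMass μ g y ∂μ = c :=
  calc ∫⁻ v, c * g v y / columnMass μ g y ∂μ
      = ∫⁻ v, c / columnMass μ g y * g v y ∂μ := by simp only [ENNReal.mul_div_right_comm]
    _ = c / columnMass μ g y * columnMass μ g y := lintegral_const_mul'' _ hgy
    _ = c := ENNReal.div_mul_cancel hzero hfin

variable [MeasurableSpace Y]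

theorem measurable_columnMass [SFinite μ] (hg : Measurable (Function.uncurry g)) :
    Measurable (columnMass μ g) :=
  hg.lintegral_prod_left'

/-- The kernel `h(u, v) = ∫ g(u, y) g(v, y) / g⁻(y) dν(y)` on `X` obtained by composing a kernel `g`
from `X` to `Y` with its reversal `(y, v) ↦ g(v, y) / g⁻(y)`. The integrand is `0` where
`g⁻(y) = ∞`, since `a / ∞ = 0` in `ℝ≥0∞` for every `a`. -/
noncomputable def symmetrizedKernel (μ : Measure X) (ν : Measure Y) (g : X → Y → ℝ≥0∞)
    (u v : X) : ℝ≥0∞ :=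
  ∫⁻ y, g u y * g v y / columnMass μ g y ∂ν

variable {ν : Measure Y}

theorem symmetrizedKernel_comm (u v : X) :
    symmetrizedKernel μ ν g u v = symmetrizedKernel μ ν g v u := by
  simp only [symmetrizedKernel, mul_comm]

theorem symmetrizedKernel_pos [SFinite μ] (hν : ν ≠ 0) (hg : Measurable (Function.uncurry g))
    (hfin : ∀ᵐ y ∂ν, columnMass μ g y ≠ ∞) {u v : X}
    (hu : ∀ᵐ y ∂ν, g u y ≠ 0) (hv : ∀ᵐ y ∂ν, g v y ≠ 0) :
    0 < symmetrizedKernel μ ν g u v := by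
  have hmeas : Measurable fun y ↦ g u y * g v y / columnMass μ g y :=
    (hg.of_uncurry_left.mul hg.of_uncurry_left).div (measurable_columnMass hg)
  apply lintegral_pos_of_ae_ne_zero hν hmeas.aemeasurable
  filter_upwards [hfin, hu, hv] with y hfin_y hu_y hv_y
  exact ENNReal.div_ne_zero.mpr ⟨mul_ne_zero hu_y hv_y, hfin_y⟩

theorem lintegral_symmetrizedKernel [SFinite μ] [SFinite ν] (hg : Measurable (Function.uncurry g))
    (hzero : ∀ᵐ y ∂ν, columnMass μ g y ≠ 0) (hfin : ∀ᵐ y ∂ν, columnMass μ g y ≠ ∞) (u : X) :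
    ∫⁻ v, symmetrizedKernel μ ν g u v ∂μ = ∫⁻ y, g u y ∂ν := by
  have hmeas : Measurable fun p : X × Y ↦ g u p.2 * g p.1 p.2 / columnMass μ g p.2 :=
    ((hg.of_uncurry_left.comp measurable_snd).mul hg).div
      ((measurable_columnMass hg).comp measurable_snd)
  calc ∫⁻ v, symmetrizedKernel μ ν g u v ∂μ
      = ∫⁻ y, ∫⁻ v, g u y * g v y / columnMass μ g y ∂μ ∂ν :=
        lintegral_lintegral_swap hmeas.aemeasurable
    _ = ∫⁻ y, g u y ∂ν := by
        apply lintegral_congr_ae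
        filter_upwards [hzero, hfin] with y hzero_y hfin_y
        exact lintegral_mul_div_columnMass hg.of_uncurry_right.aemeasurable hzero_y hfin_y _

end Kernel

theorem stmt5_general {X Y : Type*} [MeasurableSpace X] [MeasurableSpace Y]
    (μ : Measure X) (ν : Measure Y) [SFinite μ] [SFinite ν] (hμ : μ ≠ 0)
    (g : X → Y → ℝ≥0∞) (hg : Measurable (Function.uncurry g)) (hpos : ∀ u y, 0 < g u y)
    (hone : ∀ u, ∫⁻ y, g u y ∂ν = 1) (hfin : ∀ᵐ y ∂ν, columnMass μ g y < ∞) :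
    (∀ u v, symmetrizedKernel μ ν g u v = symmetrizedKernel μ ν g v u) ∧
    (∀ u v, 0 < symmetrizedKernel μ ν g u v) ∧
    (∀ u, ∫⁻ v, symmetrizedKernel μ ν g u v ∂μ = 1) := by
  have hne (u : X) (y : Y) : g u y ≠ 0 := (hpos u y).ne'
  have hfin' : ∀ᵐ y ∂ν, columnMass μ g y ≠ ∞ := hfin.mono fun _ ↦ LT.lt.ne
  have hzero (y : Y) : columnMass μ g y ≠ 0 :=
    (columnMass_pos hμ hg.of_uncurry_right.aemeasurable (.of_forall (hne · y))).ne'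
  refine ⟨symmetrizedKernel_comm, fun u v ↦ ?_, fun u ↦ ?_⟩
  · have hν : ν ≠ 0 := by
      rintro rfl
      simpa using hone u
    exact symmetrizedKernel_pos hν hg hfin' (.of_forall (hne u)) (.of_forall (hne v))
  · rw [lintegral_symmetrizedKernel hg (.of_forall hzero) hfin', hone]

/-- Let `μ` be a nonzero σ-finite measure on a measurable space `X` and let
`g : X × X → (0,∞)` be jointly measurable with `∫ g u x dμ x = 1` for every `u`.  Write
`g⁻ x := ∫ g y x dμ y` and assume `g⁻ x < ∞` for `μ`-a.e. `x`.  Define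
`h u v := ∫ g u x * g v x / g⁻ x dμ x` (the integrand vanishing where `g⁻ x = ∞`, as is
automatic for `ℝ≥0∞`-division).  Then `h` is symmetric, strictly positive, and
`∫ h u v dμ v = 1` for every `u`. -/
theorem stmt5 {X : Type*} [MeasurableSpace X] (μ : Measure X) [SigmaFinite μ] (hμ0 : μ ≠ 0)
    (g : X → X → ℝ≥0∞) (hgm : Measurable (Function.uncurry g))
    (hgpos : ∀ u v : X, 0 < g u v) (hgfin : ∀ u v : X, g u v < ⊤)
    (hg1 : ∀ u : X, ∫⁻ x, g u x ∂μ = 1)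
    (hgminus : ∀ᵐ x ∂μ, (∫⁻ y, g y x ∂μ) < ⊤) :
    (∀ u v : X,
      (∫⁻ x, g u x * g v x / (∫⁻ y, g y x ∂μ) ∂μ)
        = ∫⁻ x, g v x * g u x / (∫⁻ y, g y x ∂μ) ∂μ) ∧
    (∀ u v : X, 0 < ∫⁻ x, g u x * g v x / (∫⁻ y, g y x ∂μ) ∂μ) ∧
    (∀ u : X, ∫⁻ v, (∫⁻ x, g u x * g v x / (∫⁻ y, g y x ∂μ) ∂μ) ∂μ = 1) :=
  stmt5_general μ μ hμ0 g hgm hgpos hg1 hgminus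
end

section
/- Let Ψ be a mass-stationary random measure on ℝ^d with Ψ ≠ 0 almost surely, and let f : M(ℝ^d) × ℝ^d → {0,1} be a measurable function that is translation-covariant in the sense that f(T_tψ, x − t) = f(ψ, x) for all t, x, ψ. Write S_ψ := {x ∈ ℝ^d : f(ψ, x) = 1}. Then: (a) f(Ψ, 0) = 1 almost surely if and only if Ψ(ℝ^d ∖ S_Ψ) = 0 almost surely; and (b) P(f(Ψ, 0) = 1) > 0 if and only if P(Ψ(S_Ψ) > 0) > 0. -/
open MeasureTheory ENNReal

noncomputable section

/-- `ℝ^d`. -/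
abbrev Vec (d : ℕ) := Fin d → ℝ

/-- The shift `T_t ψ`, defined by `(T_t ψ)(A) = ψ(A + t)`. -/
def shiftM {d : ℕ} (t : Vec d) (ψ : Measure (Vec d)) : Measure (Vec d) :=
  ψ.map (fun x => x - t)

/-- A measure is in `M(ℝ^d)` iff it is finite on bounded sets. -/
def BddFinite {d : ℕ} (ψ : Measure (Vec d)) : Prop :=
  ∀ s : Set (Vec d), Bornology.IsBounded s → ψ s < ⊤

/-- Translation covariance of `g : M(ℝ^d) × ℝ^d × ℝ^d → [0,∞]`. -/
def Covariant3 {d : ℕ} (g : Measure (Vec d) → Vec d → Vec d → ℝ≥0∞) : Prop :=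
  ∀ (t x y : Vec d) (ψ : Measure (Vec d)), g (shiftM t ψ) (x - t) (y - t) = g ψ x y

/-- A random measure `Ψ` on a probability space `(Ω, P)` is mass-stationary if the mass
transport principle holds for every translation-covariant measurable `g`. -/
def MassStationary {d : ℕ} {Ω : Type*} [MeasurableSpace Ω] (P : Measure Ω)
    (Ψ : Ω → Measure (Vec d)) : Prop :=
  ∀ g : Measure (Vec d) → Vec d → Vec d → ℝ≥0∞,
    Measurable (fun p : Measure (Vec d) × Vec d × Vec d => g p.1 p.2.1 p.2.2) →
    Covariant3 g →
    ∫⁻ ω, (∫⁻ y, g (Ψ ω) 0 y ∂(Ψ ω)) ∂P = ∫⁻ ω, (∫⁻ y, g (Ψ ω) y 0 ∂(Ψ ω)) ∂P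

/-!
Transporting with density `1` from `x` to all `y` when `x` lies in a covariant set `s` turns the
mass transport principle into
`∫_{(Ψ, 0) ∈ s} Ψ(ℝ^d) dP = ∫ Ψ {x | (Ψ, x) ∈ s} dP`.
As `Ψ(ℝ^d) > 0`, the left side vanishes iff the origin almost surely avoids `s`. The right side
vanishes iff `Ψ` almost surely gives `s` no mass, because `Ψ {x | (Ψ, x) ∈ s}` is almost everywhere
measurable, as one sees by cutting `Ψ` into countably many finite pieces. Part (a) is the case
`s = {f = 0}`; part (b) is the negation of the case `s = {f = 1}`.
-/

section MeasurableFibers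

open ProbabilityTheory

variable {Ω E : Type*} [MeasurableSpace Ω] [MeasurableSpace E] {B : ℕ → Set E}
  {A : Set (Ω × E)}

lemma measurable_kernel_prodMk_left_of_iUnion_eq_univ (κ : Kernel Ω E)
    (hB : ∀ n, MeasurableSet (B n)) (hBU : ⋃ n, B n = Set.univ)
    (hfin : ∀ n ω, κ ω (B n) < ⊤) (hA : MeasurableSet A) :
    Measurable fun ω => κ ω (Prod.mk ω ⁻¹' A) := by
  have hD : ∀ n, MeasurableSet (disjointed B n) := MeasurableSet.disjointed hB
  have hsum : ∀ ω, κ ω (Prod.mk ω ⁻¹' A) =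
      ∑' n, κ.restrict (hD n) ω (Prod.mk ω ⁻¹' A) := fun ω => by
    simp only [Kernel.restrict_apply]
    rw [← Measure.sum_apply _ (measurable_prodMk_left hA),
      ← Measure.restrict_iUnion (disjoint_disjointed B) hD, iUnion_disjointed, hBU,
      Measure.restrict_univ]
  have hfinD : ∀ n ω, IsFiniteMeasure (κ.restrict (hD n) ω) := fun n ω => by
    rw [Kernel.restrict_apply, isFiniteMeasure_restrict]
    exact ((measure_mono (disjointed_subset B n)).trans_lt (hfin n ω)).ne
  simp only [hsum]
  exact Measurable.tsum fun n =>
    Kernel.measurable_kernel_prodMk_left_of_finite hA (hfinD n)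

variable {P : Measure Ω} {Ψ : Ω → Measure E}

lemma aemeasurable_measure_prodMk_left (hΨ : Measurable Ψ)
    (hB : ∀ n, MeasurableSet (B n)) (hBU : ⋃ n, B n = Set.univ)
    (hfin : ∀ᵐ ω ∂P, ∀ n, Ψ ω (B n) < ⊤) (hA : MeasurableSet A) :
    AEMeasurable (fun ω => Ψ ω (Prod.mk ω ⁻¹' A)) P := by
  classical
  have hgood : MeasurableSet {ω | ∀ n, Ψ ω (B n) < ⊤} := by
    rw [Set.ofPred_forall]
    exact MeasurableSet.iInter fun n =>
      measurableSet_lt ((Measure.measurable_coe (hB n)).comp hΨ) measurable_const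
  let κ : Kernel Ω E := Kernel.piecewise hgood ⟨Ψ, hΨ⟩ 0
  have hκ_fin : ∀ n ω, κ ω (B n) < ⊤ := fun n ω => by
    rw [Kernel.piecewise_apply]
    split_ifs with hω
    · exact hω n
    · simp
  have hκ_ae : ∀ᵐ ω ∂P, Ψ ω = κ ω := by
    filter_upwards [hfin] with ω hω
    exact (if_pos hω).symm
  refine ⟨_, measurable_kernel_prodMk_left_of_iUnion_eq_univ κ hB hBU hκ_fin hA, ?_⟩
  filter_upwards [hκ_ae] with ω hω
  rw [hω]

lemma ae_notMem_iff_ae_measure_prodMk_left_eq_zero (hΨ : Measurable Ψ)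
    (hB : ∀ n, MeasurableSet (B n)) (hBU : ⋃ n, B n = Set.univ)
    (hfin : ∀ᵐ ω ∂P, ∀ n, Ψ ω (B n) < ⊤) (hne : ∀ᵐ ω ∂P, Ψ ω ≠ 0) (hA : MeasurableSet A)
    {o : E} (hmass : ∫⁻ ω in {ω | (ω, o) ∈ A}, Ψ ω Set.univ ∂P =
      ∫⁻ ω, Ψ ω (Prod.mk ω ⁻¹' A) ∂P) :
    (∀ᵐ ω ∂P, (ω, o) ∉ A) ↔ ∀ᵐ ω ∂P, Ψ ω (Prod.mk ω ⁻¹' A) = 0 := by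
  have hAo : MeasurableSet {ω | (ω, o) ∈ A} := measurable_prodMk_right hA
  have huniv : Measurable fun ω => Ψ ω Set.univ :=
    (Measure.measurable_coe MeasurableSet.univ).comp hΨ
  calc (∀ᵐ ω ∂P, (ω, o) ∉ A)
      ↔ ∀ᵐ ω ∂P, (ω, o) ∈ A → Ψ ω Set.univ = 0 := by
        refine Filter.eventually_congr ?_
        filter_upwards [hne] with ω hω
        simp [hω]
    _ ↔ ∫⁻ ω in {ω | (ω, o) ∈ A}, Ψ ω Set.univ ∂P = 0 :=
        (setLIntegral_eq_zero_iff hAo huniv).symm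
    _ ↔ ∫⁻ ω, Ψ ω (Prod.mk ω ⁻¹' A) ∂P = 0 := by rw [hmass]
    _ ↔ ∀ᵐ ω ∂P, Ψ ω (Prod.mk ω ⁻¹' A) = 0 :=
        lintegral_eq_zero_iff' (aemeasurable_measure_prodMk_left hΨ hB hBU hfin hA)

end MeasurableFibers

section MassStationary

variable {d : ℕ} {Ω : Type*} [MeasurableSpace Ω] {P : Measure Ω} {Ψ : Ω → Measure (Vec d)}
  {s : Set (Measure (Vec d) × Vec d)}

lemma MassStationary.setLIntegral_measure_univ (hms : MassStationary P Ψ) (hΨ : Measurable Ψ)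
    (hs : MeasurableSet s) (hcov : ∀ t x ψ, (shiftM t ψ, x - t) ∈ s ↔ (ψ, x) ∈ s) :
    ∫⁻ ω in {ω | (Ψ ω, 0) ∈ s}, Ψ ω Set.univ ∂P = ∫⁻ ω, Ψ ω {x | (Ψ ω, x) ∈ s} ∂P := by
  classical
  have htransport := hms (fun ψ x _ => s.indicator 1 (ψ, x))
    ((measurable_one.indicator hs).comp (by fun_prop))
    (fun t x _ ψ => by simp only [Set.indicator_apply, hcov, Pi.one_apply])
  have hout : ∀ ω, ∫⁻ _, s.indicator 1 (Ψ ω, (0 : Vec d)) ∂(Ψ ω) =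
      {ω | (Ψ ω, 0) ∈ s}.indicator (fun ω => Ψ ω Set.univ) ω := fun ω => by
    by_cases hω : (Ψ ω, 0) ∈ s <;> simp [hω]
  have hin : ∀ ω, ∫⁻ x, s.indicator 1 (Ψ ω, x) ∂(Ψ ω) = Ψ ω {x | (Ψ ω, x) ∈ s} := fun ω =>
    lintegral_indicator_one (measurable_prodMk_left hs)
  have h0 : MeasurableSet {ω | (Ψ ω, 0) ∈ s} := (hΨ.prodMk measurable_const) hs
  simpa only [hout, hin, lintegral_indicator h0] using htransport

lemma MassStationary.ae_notMem_iff_ae_measure_eq_zero (hms : MassStationary P Ψ)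
    (hΨ : Measurable Ψ) (hbf : ∀ᵐ ω ∂P, BddFinite (Ψ ω)) (hne : ∀ᵐ ω ∂P, Ψ ω ≠ 0)
    (hs : MeasurableSet s) (hcov : ∀ t x ψ, (shiftM t ψ, x - t) ∈ s ↔ (ψ, x) ∈ s) :
    (∀ᵐ ω ∂P, (Ψ ω, 0) ∉ s) ↔ ∀ᵐ ω ∂P, Ψ ω {x | (Ψ ω, x) ∈ s} = 0 :=
  ae_notMem_iff_ae_measure_prodMk_left_eq_zero (A := {p : Ω × Vec d | (Ψ p.1, p.2) ∈ s}) hΨ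
    (fun n : ℕ => (Metric.isClosed_closedBall (x := 0) (ε := n)).measurableSet)
    (Metric.iUnion_closedBall_nat 0)
    (hbf.mono fun _ hω _ => hω _ Metric.isBounded_closedBall) hne
    (((hΨ.comp measurable_fst).prodMk measurable_snd) hs)
    (hms.setLIntegral_measure_univ hΨ hs hcov)

end MassStationary

theorem stmt6_general {d : ℕ} {Ω : Type*} [MeasurableSpace Ω] (P : Measure Ω)
    (Ψ : Ω → Measure (Vec d)) (hΨm : Measurable Ψ)
    (hbf : ∀ᵐ ω ∂P, BddFinite (Ψ ω))
    (hne : ∀ᵐ ω ∂P, Ψ ω ≠ 0)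
    (hms : MassStationary P Ψ)
    (f : Measure (Vec d) → Vec d → Bool)
    (hfm : Measurable (fun p : Measure (Vec d) × Vec d => f p.1 p.2))
    (hfcov : ∀ (t x : Vec d) (ψ : Measure (Vec d)), f (shiftM t ψ) (x - t) = f ψ x) :
    ((∀ᵐ ω ∂P, f (Ψ ω) 0 = true) ↔ (∀ᵐ ω ∂P, Ψ ω {x | f (Ψ ω) x = true}ᶜ = 0)) ∧
    (0 < P {ω | f (Ψ ω) 0 = true} ↔ 0 < P {ω | 0 < Ψ ω {x | f (Ψ ω) x = true}}) := by
  constructor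
  · simpa [Set.compl_ofPred] using hms.ae_notMem_iff_ae_measure_eq_zero hΨm hbf hne
      (hfm (measurableSet_singleton false)) (fun t x ψ => by simp [hfcov])
  · simpa [ae_iff, pos_iff_ne_zero] using not_congr <|
      hms.ae_notMem_iff_ae_measure_eq_zero hΨm hbf hne
        (hfm (measurableSet_singleton true)) (fun t x ψ => by simp [hfcov])

/-- "everything happens at the origin".  Let `Ψ` be a mass-stationary random
measure on `ℝ^d` with `Ψ ≠ 0` a.s., and let `f : M(ℝ^d) × ℝ^d → {0,1}` be measurable and
translation-covariant; write `S_ψ := {x | f ψ x = 1}`.  Then (a) `f Ψ 0 = 1` a.s. iff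
`Ψ(S_Ψᶜ) = 0` a.s.; and (b) `P(f Ψ 0 = 1) > 0` iff `P(Ψ(S_Ψ) > 0) > 0`. -/
theorem stmt6 {d : ℕ} {Ω : Type*} [MeasurableSpace Ω] (P : Measure Ω) [IsProbabilityMeasure P]
    (Ψ : Ω → Measure (Vec d)) (hΨm : Measurable Ψ)
    (hbf : ∀ᵐ ω ∂P, BddFinite (Ψ ω))
    (hne : ∀ᵐ ω ∂P, Ψ ω ≠ 0)
    (hms : MassStationary P Ψ)
    (f : Measure (Vec d) → Vec d → Bool)
    (hfm : Measurable (fun p : Measure (Vec d) × Vec d => f p.1 p.2))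
    (hfcov : ∀ (t x : Vec d) (ψ : Measure (Vec d)), f (shiftM t ψ) (x - t) = f ψ x) :
    ((∀ᵐ ω ∂P, f (Ψ ω) 0 = true) ↔ (∀ᵐ ω ∂P, Ψ ω {x | f (Ψ ω) x = true}ᶜ = 0)) ∧
    (0 < P {ω | f (Ψ ω) 0 = true} ↔ 0 < P {ω | 0 < Ψ ω {x | f (Ψ ω) x = true}}) :=
  stmt6_general P Ψ hΨm hbf hne hms f hfm hfcov
end
end

section
/- If Ψ is a mass-stationary random measure on ℝ^d with Ψ ≠ 0 almost surely, then almost surely the origin 0 lies in the (topological) support of Ψ. -/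
open MeasureTheory ENNReal

noncomputable section

/-!
Let each point `x` send unit mass to every point `y` precisely when `x` lies outside the support
of `Ψ`. The support of any measure on `ℝ^d` is conull, so nothing arrives at the origin; by the
mass transport principle nothing leaves it either. But if the origin is outside the support it
sends out the total mass of `Ψ`, so almost surely this mass is zero.
-/

section Support

variable {X Y : Type*} [TopologicalSpace X] [MeasurableSpace X] [TopologicalSpace Y]
  [MeasurableSpace Y] [OpensMeasurableSpace Y]

theorem mem_support_map_iff_of_isInducing {f : X → Y} (hf : Topology.IsInducing f)
    (hfm : Measurable f) {μ : Measure X} {x : X} :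
    f x ∈ (μ.map f).support ↔ x ∈ μ.support := by
  have basis_source := (nhds_basis_opens (f x)).comap f
  rw [← hf.nhds_eq_comap] at basis_source
  rw [(nhds_basis_opens (f x)).mem_measureSupport, basis_source.mem_measureSupport]
  refine forall₂_congr fun U hU => ?_
  rw [Measure.map_apply hfm hU.2.measurableSet]

theorem measurableSet_setOf_mem_support [SecondCountableTopology Y] :
    MeasurableSet {q : Measure Y × Y | q.2 ∈ q.1.support} := by
  let B := TopologicalSpace.countableBasis Y
  have hB : TopologicalSpace.IsTopologicalBasis B := TopologicalSpace.isBasis_countableBasis Y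
  have compl_eq : {q : Measure Y × Y | q.2 ∈ q.1.support}ᶜ =
      ⋃ U ∈ B, {μ : Measure Y | μ U = 0} ×ˢ U := by
    ext ⟨μ, x⟩
    simp only [Set.mem_compl_iff, Set.mem_ofPred_eq, hB.nhds_hasBasis.notMem_measureSupport,
      Set.mem_iUnion, Set.mem_prod, exists_prop]
    tauto
  refine MeasurableSet.of_compl (compl_eq ▸ ?_)
  refine .biUnion (TopologicalSpace.countable_countableBasis Y) fun U hU => ?_
  have hUm : MeasurableSet U := (hB.isOpen hU).measurableSet
  exact (Measure.measurable_coe hUm (measurableSet_singleton 0)).prod hUm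

end Support

section MassTransport

variable {d : ℕ}

theorem sub_mem_support_shiftM_iff (t x : Vec d) (ψ : Measure (Vec d)) :
    x - t ∈ (shiftM t ψ).support ↔ x ∈ ψ.support :=
  mem_support_map_iff_of_isInducing (Homeomorph.subRight t).isInducing (measurable_sub_const t)

variable {Ω : Type*} [MeasurableSpace Ω] {P : Measure Ω} {Ψ : Ω → Measure (Vec d)}

theorem MassStationary.ae_apply_zero_of_ae_ae (hms : MassStationary P Ψ) (hΨ : AEMeasurable Ψ P)
    {p : Measure (Vec d) → Vec d → Prop}
    (hp : MeasurableSet {q : Measure (Vec d) × Vec d | p q.1 q.2})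
    (hcov : ∀ t x ψ, p (shiftM t ψ) (x - t) ↔ p ψ x)
    (hae : ∀ᵐ ω ∂P, ∀ᵐ y ∂Ψ ω, p (Ψ ω) y) :
    ∀ᵐ ω ∂P, Ψ ω ≠ 0 → p (Ψ ω) 0 := by
  classical
  let bad (ψ : Measure (Vec d)) (x : Vec d) : ℝ≥0∞ := if p ψ x then 0 else 1
  have bad_measurable : Measurable fun q : Measure (Vec d) × Vec d => bad q.1 q.2 :=
    Measurable.ite hp measurable_const measurable_const
  have mass_transport : ∫⁻ ω, ∫⁻ _, bad (Ψ ω) 0 ∂Ψ ω ∂P = ∫⁻ ω, ∫⁻ y, bad (Ψ ω) y ∂Ψ ω ∂P :=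
    hms (fun ψ x _ => bad ψ x)
      (bad_measurable.comp (measurable_fst.prodMk (measurable_fst.comp measurable_snd)))
      fun t x _ ψ => by simp only [bad, hcov]
  have mass_received : ∫⁻ ω, ∫⁻ y, bad (Ψ ω) y ∂Ψ ω ∂P = 0 := by
    refine lintegral_eq_zero_of_ae_eq_zero ?_
    filter_upwards [hae] with ω hω
    exact lintegral_eq_zero_of_ae_eq_zero (hω.mono fun _ hy => if_pos hy)
  have mass_sent : ∫⁻ ω, bad (Ψ ω) 0 * Ψ ω Set.univ ∂P = 0 := by
    simpa only [lintegral_const] using mass_transport.trans mass_received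
  have mass_sent_aemeasurable : AEMeasurable (fun ω => bad (Ψ ω) 0 * Ψ ω Set.univ) P :=
    (bad_measurable.comp_aemeasurable (hΨ.prodMk aemeasurable_const)).mul
      ((Measure.measurable_coe MeasurableSet.univ).comp_aemeasurable hΨ)
  filter_upwards [(lintegral_eq_zero_iff' mass_sent_aemeasurable).1 mass_sent] with ω hω hne
  by_contra hnot
  have : Ψ ω Set.univ = 0 := by simpa only [bad, if_neg hnot, one_mul, Pi.zero_apply] using hω
  exact hne (Measure.measure_univ_eq_zero.1 this)

theorem stmt7_general (hΨ : AEMeasurable Ψ P) (hms : MassStationary P Ψ) :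
    ∀ᵐ ω ∂P, Ψ ω ≠ 0 → 0 ∈ (Ψ ω).support :=
  hms.ae_apply_zero_of_ae_ae (p := fun ψ x => x ∈ ψ.support) hΨ
    measurableSet_setOf_mem_support sub_mem_support_shiftM_iff
    (.of_forall fun _ => Measure.support_mem_ae)

end MassTransport

/-- If `Ψ` is a mass-stationary random measure on `ℝ^d` with `Ψ ≠ 0` a.s.,
then almost surely the origin lies in the topological support of `Ψ`, i.e. every open
neighborhood of `0` has positive `Ψ`-measure. -/
theorem stmt7 {d : ℕ} {Ω : Type*} [MeasurableSpace Ω] (P : Measure Ω) [IsProbabilityMeasure P]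
    (Ψ : Ω → Measure (Vec d)) (hΨm : Measurable Ψ)
    (hbf : ∀ᵐ ω ∂P, BddFinite (Ψ ω))
    (hne : ∀ᵐ ω ∂P, Ψ ω ≠ 0)
    (hms : MassStationary P Ψ) :
    ∀ᵐ ω ∂P, ∀ U : Set (Vec d), IsOpen U → (0 : Vec d) ∈ U → 0 < Ψ ω U := by
  filter_upwards [stmt7_general hΨm.aemeasurable hms, hne] with ω hsupp hω U hU h0
  exact (Measure.mem_support_iff_forall 0).1 (hsupp hω) U (hU.mem_nhds h0)
end
end

section
/- Let Ψ be a mass-stationary random measure on ℝ^d with Ψ(ℝ^d) = ∞ almost surely, and let f : M(ℝ^d) × ℝ^d → {0,1} be a measurable function that is translation-covariant in the sense that f(T_tψ, x − t) = f(ψ, x) for all t, x, ψ; write S_ψ := {x ∈ ℝ^d : f(ψ, x) = 1}. Then almost surely the set S_Ψ is either empty or unbounded, and almost surely Ψ(S_Ψ) ∈ {0, ∞}. -/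
open MeasureTheory ENNReal

noncomputable section

/-!
Call `visitSet B ψ` the set of points `x` with `T_x ψ ∈ B`; by covariance `S_ψ` is the visit set
of `B = {ψ | 0 ∈ S_ψ}`. Applied to `g(ψ, x, y) = F(T_y ψ)`, the mass transport principle reads
`E ∫ F(T_y Ψ) Ψ(dy) = E[F(Ψ) Ψ(ℝ^d)]`, whose right side is `0` or `∞` when `Ψ(ℝ^d) = ∞`. If every
point of `S_Ψ` receives mass `1 / Ψ(S_Ψ)`, so `F(ψ) = 1_B(ψ) / ψ(S_ψ)`, the left side is
`P(0 < Ψ(S_Ψ) < ∞) ≤ 1`, hence `0`.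

For the first claim apply this to the `n`-neighbourhood of `S_Ψ` on the event that `S_Ψ` is bounded:
it has finite mass, hence mass `0` for all `n`, although these neighbourhoods exhaust `ℝ^d` unless
`S_Ψ` is empty. The neighbourhood is a projection of the graph of `S`, so it comes from a set `B`
that is only null measurable; this is the measurable projection theorem, a consequence of the
capacitability of analytic sets. Replacing `B` by a measurable set `B'` preserves covariance, and by
the mass transport principle a null set `B ∆ B'` has a `Ψ`-null visit set almost surely.
-/

section AnalyticSets

lemma exists_forall_lt_measure_image_initial_le {Y : Type*} [MeasurableSpace Y] (μ : Measure Y)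
    (f : (ℕ → ℕ) → Y) {c : ℝ≥0∞} (hc : c < μ (Set.range f)) :
    ∃ b : ℕ → ℕ, ∀ k, c < μ (f '' {x | ∀ i < k, x i ≤ b i}) := by
  have exists_bound (k : ℕ) (D : Set (ℕ → ℕ)) (hD : c < μ (f '' D)) :
      ∃ n, c < μ (f '' (D ∩ {x | x k ≤ n})) := by
    have hmono : Monotone fun n ↦ f '' (D ∩ {x | x k ≤ n}) := fun m n hmn ↦
      Set.image_mono (Set.inter_subset_inter_right _ fun x hx ↦ le_trans hx hmn)
    have hcover : ⋃ n, {x : ℕ → ℕ | x k ≤ n} = Set.univ :=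
      Set.iUnion_eq_univ_iff.2 fun x ↦ ⟨x k, Set.mem_ofPred.2 le_rfl⟩
    rw [← Set.inter_univ D, ← hcover, Set.inter_iUnion, Set.image_iUnion,
      hmono.measure_iUnion] at hD
    exact lt_iSup_iff.1 hD
  choose! n hn using exists_bound
  let D : ℕ → Set (ℕ → ℕ) := fun k ↦ Nat.rec Set.univ (fun k D ↦ D ∩ {x | x k ≤ n k D}) k
  have hD (k : ℕ) : D k = {x | ∀ i < k, x i ≤ n i (D i)} := by
    induction k with
    | zero => simp [D]
    | succ k ih =>
      change D k ∩ {x | x k ≤ n k (D k)} = _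
      rw [Set.ext_iff] at ih ⊢
      simp only [Set.mem_inter_iff, ih, Nat.forall_lt_succ_right, Set.mem_ofPred_eq, implies_true]
  refine ⟨fun i ↦ n i (D i), fun k ↦ ?_⟩
  rw [← hD]
  induction k with
  | zero => simpa [D] using hc
  | succ k ih => exact hn k _ ih

lemma exists_initial_le_subset_of_isOpen (b : ℕ → ℕ) {W : Set (ℕ → ℕ)} (hW : IsOpen W)
    (hbW : Set.Iic b ⊆ W) : ∃ k, {x : ℕ → ℕ | ∀ i < k, x i ≤ b i} ⊆ W := by
  let := PiNat.metricSpaceNatNat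
  have hcompact : IsCompact (Set.Iic b) := Set.Icc_bot (a := b) ▸ isCompact_Icc
  obtain ⟨δ, hδ, hδW⟩ := hcompact.exists_thickening_subset_open hW hbW
  obtain ⟨k, hk⟩ := exists_pow_lt_of_lt_one hδ one_half_lt_one
  refine ⟨k, fun x hx ↦ hδW (Metric.mem_thickening_iff.2 ⟨x ⊓ b, Set.mem_Iic.2 inf_le_right, ?_⟩)⟩
  have hcyl : x ∈ PiNat.cylinder (x ⊓ b) k := fun i hi ↦ (min_eq_left (hx i hi)).symm
  exact (PiNat.mem_cylinder_iff_dist_le.1 hcyl).trans_lt hk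

lemma iInter_closure_image_initial_le {Y : Type*} [TopologicalSpace Y] [T2Space Y]
    {f : (ℕ → ℕ) → Y} (hf : Continuous f) (b : ℕ → ℕ) :
    ⋂ k, closure (f '' {x | ∀ i < k, x i ≤ b i}) = f '' Set.Iic b := by
  have hcompact : IsCompact (f '' Set.Iic b) := (Set.Icc_bot (a := b) ▸ isCompact_Icc).image hf
  have hsub (k : ℕ) : Set.Iic b ⊆ {x | ∀ i < k, x i ≤ b i} := fun _ hx i _ ↦ hx i
  refine Set.Subset.antisymm (fun y hy ↦ ?_)
    (Set.subset_iInter fun k ↦ (Set.image_mono (hsub k)).trans subset_closure)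
  by_contra hyb
  obtain ⟨U, V, hU, hV, hbU, hyV, hUV⟩ := hcompact.separation_of_notMem hyb
  obtain ⟨k, hk⟩ := exists_initial_le_subset_of_isOpen b (hU.preimage hf)
    (Set.image_subset_iff.1 hbU)
  exact Set.disjoint_left.1 (hUV.closure_left hV)
    (closure_mono (Set.image_subset_iff.2 hk) (Set.mem_iInter.1 hy k)) hyV

lemma exists_isCompact_subset_range_le_measure {Y : Type*} [TopologicalSpace Y] [T2Space Y]
    [MeasurableSpace Y] [OpensMeasurableSpace Y] (μ : Measure Y) [IsFiniteMeasure μ]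
    {f : (ℕ → ℕ) → Y} (hf : Continuous f) {c : ℝ≥0∞} (hc : c < μ (Set.range f)) :
    ∃ K, IsCompact K ∧ K ⊆ Set.range f ∧ c ≤ μ K := by
  obtain ⟨b, hb⟩ := exists_forall_lt_measure_image_initial_le μ f hc
  refine ⟨f '' Set.Iic b, (Set.Icc_bot (a := b) ▸ isCompact_Icc).image hf,
    Set.image_subset_range _ _, ?_⟩
  have hanti : Antitone fun k ↦ closure (f '' {x | ∀ i < k, x i ≤ b i}) := fun j k hjk ↦
    closure_mono (Set.image_mono fun x hx i hi ↦ hx i (hi.trans_le hjk))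
  rw [← iInter_closure_image_initial_le hf b,
    hanti.measure_iInter (fun _ ↦ isClosed_closure.nullMeasurableSet) ⟨0, measure_ne_top _ _⟩]
  exact le_iInf fun k ↦ (hb k).le.trans (measure_mono subset_closure)

lemma nullMeasurableSet_of_forall_lt_exists_subset {α : Type*} [MeasurableSpace α] {μ : Measure α}
    [IsFiniteMeasure μ] {s : Set α}
    (hs : ∀ c < μ s, ∃ t, MeasurableSet t ∧ t ⊆ s ∧ c ≤ μ t) : NullMeasurableSet s μ := by
  rcases eq_or_ne (μ s) 0 with h0 | h0
  · exact .of_null h0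
  obtain ⟨u, -, hu, hulim⟩ := exists_seq_strictMono_tendsto' (pos_iff_ne_zero.2 h0)
  choose t htm hts hut using fun n ↦ hs (u n) (hu n).2
  have hle : μ (toMeasurable μ s) ≤ μ (⋃ n, t n) := by
    rw [measure_toMeasurable]
    exact le_of_tendsto' hulim fun n ↦ (hut n).trans (measure_mono (Set.subset_iUnion t n))
  have hsub : ⋃ n, t n ⊆ s := Set.iUnion_subset hts
  have hm : NullMeasurableSet (⋃ n, t n) μ := (MeasurableSet.iUnion htm).nullMeasurableSet
  have hae : ⋃ n, t n =ᵐ[μ] toMeasurable μ s :=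
    ae_eq_of_subset_of_measure_ge (hsub.trans (subset_toMeasurable μ s)) hle hm
      (measure_ne_top _ _)
  exact hm.congr (hsub.eventuallyLE.antisymm
    ((subset_toMeasurable μ s).eventuallyLE.trans hae.symm.le))

theorem nullMeasurableSet_of_analyticSet {Y : Type*} [TopologicalSpace Y] [T2Space Y]
    [MeasurableSpace Y] [OpensMeasurableSpace Y] {s : Set Y} (hs : AnalyticSet s)
    (μ : Measure Y) [SFinite μ] : NullMeasurableSet s μ := by
  obtain ⟨ν, _, hμν, -⟩ := exists_isFiniteMeasure_absolutelyContinuous μ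
  refine NullMeasurableSet.mono_ac ?_ hμν
  rw [AnalyticSet] at hs
  rcases hs with rfl | ⟨f, hf, rfl⟩
  · exact nullMeasurableSet_empty
  · refine nullMeasurableSet_of_forall_lt_exists_subset fun c hc ↦ ?_
    obtain ⟨K, hK, hKf, hcK⟩ := exists_isCompact_subset_range_le_measure ν hf hc
    exact ⟨K, hK.measurableSet, hKf, hcK⟩

end AnalyticSets

section MeasurableProjection

variable {α β : Type*} [MeasurableSpace α] [MeasurableSpace β]

lemma exists_measurableSet_preimage_prodMap_cantor {A : Set (α × β)} (hA : MeasurableSet A) :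
    ∃ (e : α → ℕ → Bool) (A' : Set ((ℕ → Bool) × β)),
      Measurable e ∧ MeasurableSet A' ∧ Prod.map e id ⁻¹' A' = A := by
  classical
  rw [← generateFrom_prod] at hA
  induction A, hA using MeasurableSpace.generateFrom_induction with
  | hC A hA _ =>
    obtain ⟨s, hs, u, hu, rfl⟩ := hA
    refine ⟨fun a _ ↦ decide (a ∈ s), {z | z 0 = true} ×ˢ u, ?_, ?_, ?_⟩
    · exact measurable_pi_lambda _ fun _ ↦ measurable_to_bool (by simpa [Set.preimage] using hs)
    · exact (measurableSet_eq_fun (measurable_pi_apply 0) measurable_const).prod hu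
    · ext p
      simp
  | empty => exact ⟨fun _ _ ↦ true, ∅, measurable_const, .empty, Set.preimage_empty⟩
  | compl A _ ih =>
    obtain ⟨e, A', he, hA', rfl⟩ := ih
    exact ⟨e, A'ᶜ, he, hA'.compl, rfl⟩
  | iUnion A _ ih =>
    choose e A' he hA' heA using ih
    let row (n : ℕ) (z : ℕ → Bool) (m : ℕ) : Bool := z (Nat.pair n m)
    have hrow (n : ℕ) : Measurable (row n) :=
      measurable_pi_lambda _ fun m ↦ measurable_pi_apply _
    refine ⟨fun a k ↦ e k.unpair.1 a k.unpair.2, ⋃ n, Prod.map (row n) id ⁻¹' A' n,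
      measurable_pi_lambda _ fun k ↦ (measurable_pi_apply _).comp (he _),
      .iUnion fun n ↦ (hrow n).prodMap measurable_id (hA' n), ?_⟩
    ext p
    simp only [← heA, row, Set.preimage_iUnion, Set.mem_iUnion, Set.mem_preimage, Prod.map,
      Nat.unpair_pair, id]

theorem nullMeasurableSet_image_fst [StandardBorelSpace β] {A : Set (α × β)}
    (hA : MeasurableSet A) (μ : Measure α) [SFinite μ] : NullMeasurableSet (Prod.fst '' A) μ := by
  obtain ⟨e, A', he, hA', rfl⟩ := exists_measurableSet_preimage_prodMap_cantor hA
  have hanalytic : AnalyticSet (Prod.fst '' A') := hA'.analyticSet_image measurable_fst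
  have hpre : Prod.fst '' (Prod.map e id ⁻¹' A') = e ⁻¹' (Prod.fst '' A') := by
    ext a
    simp
  rw [hpre]
  exact (nullMeasurableSet_of_analyticSet hanalytic (μ.map e)).preimage
    (he.quasiMeasurePreserving μ)

end MeasurableProjection

lemma measurable_measure_prodMk_left_of_iUnion_eq_univ {α β : Type*} [MeasurableSpace α]
    [MeasurableSpace β] {κ : α → Measure β} (hκ : Measurable κ) {s : ℕ → Set β}
    (hs : ∀ n, MeasurableSet (s n)) (hmono : Monotone s) (hcover : ⋃ n, s n = Set.univ)
    (hfin : ∀ a n, κ a (s n) < ⊤) {A : Set (α × β)} (hA : MeasurableSet A) :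
    Measurable fun a ↦ κ a (Prod.mk a ⁻¹' A) := by
  have hsup (a : α) :
      κ a (Prod.mk a ⁻¹' A) = ⨆ n, (κ a).restrict (s n) (Prod.mk a ⁻¹' A) := by
    rw [← Measure.restrict_iUnion_apply_eq_iSup hmono.directed_le (measurable_prodMk_left hA),
      hcover, Measure.restrict_univ]
  simp_rw [hsup]
  exact .iSup fun n ↦ ProbabilityTheory.Kernel.measurable_kernel_prodMk_left_of_finite
    (κ := ProbabilityTheory.Kernel.restrict ⟨κ, hκ⟩ (hs n)) hA
    fun a ↦ isFiniteMeasure_restrict.2 (hfin a n).ne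

lemma isBounded_iff_exists_nat_subset_closedBall {X : Type*} [PseudoMetricSpace X] (x : X)
    {S : Set X} : Bornology.IsBounded S ↔ ∃ n : ℕ, S ⊆ Metric.closedBall x n := by
  refine ⟨fun hS ↦ ?_, fun ⟨n, hn⟩ ↦ Metric.isBounded_closedBall.subset hn⟩
  obtain ⟨r, hr⟩ := hS.subset_closedBall x
  obtain ⟨n, hn⟩ := exists_nat_ge r
  exact ⟨n, hr.trans (Metric.closedBall_subset_closedBall hn)⟩

section Shift

variable {d : ℕ}

lemma shiftM_apply (t : Vec d) (ψ : Measure (Vec d)) (s : Set (Vec d)) :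
    shiftM t ψ s = ψ ((· - t) ⁻¹' s) :=
  (MeasurableEquiv.subRight t).map_apply s

lemma shiftM_zero (ψ : Measure (Vec d)) : shiftM 0 ψ = ψ := by
  simp [shiftM]

lemma shiftM_shiftM (s t : Vec d) (ψ : Measure (Vec d)) :
    shiftM s (shiftM t ψ) = shiftM (s + t) ψ := by
  ext A
  simp only [shiftM_apply, Set.preimage_preimage, sub_sub, add_comm s t]

lemma BddFinite.shiftM {ψ : Measure (Vec d)} (hψ : BddFinite ψ) (t : Vec d) :
    BddFinite (shiftM t ψ) := by
  intro s hs
  rw [shiftM_apply]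
  exact hψ _ ((IsometryEquiv.subRight t).isometry.antilipschitz.isBounded_preimage hs)

lemma bddFinite_shiftM_iff {t : Vec d} {ψ : Measure (Vec d)} :
    BddFinite (shiftM t ψ) ↔ BddFinite ψ := by
  refine ⟨fun hψ ↦ ?_, fun hψ ↦ hψ.shiftM t⟩
  simpa only [shiftM_shiftM, neg_add_cancel, shiftM_zero] using hψ.shiftM (-t)

lemma bddFinite_iff_forall_closedBall {ψ : Measure (Vec d)} :
    BddFinite ψ ↔ ∀ n : ℕ, ψ (Metric.closedBall 0 n) < ⊤ := by
  refine ⟨fun hψ n ↦ hψ _ Metric.isBounded_closedBall, fun hψ s hs ↦ ?_⟩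
  obtain ⟨n, hn⟩ := (isBounded_iff_exists_nat_subset_closedBall 0).1 hs
  exact (measure_mono hn).trans_lt (hψ n)

lemma measurableSet_setOf_bddFinite : MeasurableSet {ψ : Measure (Vec d) | BddFinite ψ} := by
  simp_rw [bddFinite_iff_forall_closedBall, Set.ofPred_forall]
  exact .iInter fun n ↦ Measure.measurable_coe measurableSet_closedBall measurableSet_Iio

open Classical in
/-- Retraction of all measures onto `M(ℝ^d)`. The maps `(ψ, x) ↦ T_x ψ` and `ψ ↦ ψ(S_ψ)` are
measurable on `M(ℝ^d)` only, so the transport functions, which must be measurable on all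
measures, are composed with it. -/
def bddFinitePart (ψ : Measure (Vec d)) : Measure (Vec d) :=
  if BddFinite ψ then ψ else 0

lemma bddFinitePart_of_bddFinite {ψ : Measure (Vec d)} (hψ : BddFinite ψ) :
    bddFinitePart ψ = ψ :=
  if_pos hψ

lemma bddFinite_bddFinitePart (ψ : Measure (Vec d)) : BddFinite (bddFinitePart ψ) := by
  unfold bddFinitePart
  split_ifs with hψ
  · exact hψ
  · exact fun s _ ↦ by simp

lemma bddFinitePart_shiftM (t : Vec d) (ψ : Measure (Vec d)) :
    bddFinitePart (shiftM t ψ) = shiftM t (bddFinitePart ψ) := by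
  by_cases hψ : BddFinite ψ
  · simp only [bddFinitePart, if_pos hψ, if_pos (hψ.shiftM t)]
  · rw [bddFinitePart, bddFinitePart, if_neg hψ, if_neg (bddFinite_shiftM_iff.not.2 hψ), shiftM,
      Measure.map_zero]

lemma measurable_bddFinitePart : Measurable (bddFinitePart (d := d)) :=
  Measurable.ite measurableSet_setOf_bddFinite measurable_id measurable_const

lemma measurable_bddFinitePart_prodMk_left {α : Type*} [MeasurableSpace α]
    {Φ : α → Measure (Vec d)} (hΦ : Measurable Φ) {A : Set (α × Vec d)} (hA : MeasurableSet A) :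
    Measurable fun a ↦ bddFinitePart (Φ a) (Prod.mk a ⁻¹' A) :=
  measurable_measure_prodMk_left_of_iUnion_eq_univ (measurable_bddFinitePart.comp hΦ)
    (s := fun n : ℕ ↦ Metric.closedBall 0 n) (fun _ ↦ measurableSet_closedBall)
    (fun _ _ hmn ↦ Metric.closedBall_subset_closedBall (Nat.cast_le.2 hmn))
    (Metric.iUnion_closedBall_nat 0)
    (fun a _ ↦ bddFinite_bddFinitePart (Φ a) _ Metric.isBounded_closedBall) hA

lemma measurable_shiftM_bddFinitePart :
    Measurable fun p : Measure (Vec d) × Vec d ↦ shiftM p.2 (bddFinitePart p.1) := by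
  refine Measure.measurable_of_measurable_coe _ fun s hs ↦ ?_
  simp only [shiftM_apply]
  exact measurable_bddFinitePart_prodMk_left measurable_fst
    (A := {q : (Measure (Vec d) × Vec d) × Vec d | q.2 - q.1.2 ∈ s})
    ((measurable_snd.sub (measurable_snd.comp measurable_fst)) hs)

lemma eq_empty_of_forall_measure_thickening {S : Set (Vec d)} {ψ : Measure (Vec d)}
    (hψ : BddFinite ψ) (hinf : ψ Set.univ = ⊤) (hS : Bornology.IsBounded S)
    (hthick : ∀ n : ℕ, ψ (Metric.thickening n S) = 0 ∨ ψ (Metric.thickening n S) = ⊤) :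
    S = ∅ := by
  by_contra hne
  obtain ⟨z, hz⟩ := Set.nonempty_iff_ne_empty.2 hne
  have hzero (n : ℕ) : ψ (Metric.thickening n S) = 0 :=
    (hthick n).resolve_right (hψ _ hS.thickening).ne
  have hcover : ⋃ n : ℕ, Metric.thickening n S = Set.univ := by
    refine Set.iUnion_eq_univ_iff.2 fun x ↦ ?_
    obtain ⟨n, hn⟩ := exists_nat_gt (dist x z)
    exact ⟨n, Metric.mem_thickening_iff.2 ⟨z, hz, hn⟩⟩
  rw [← hcover, measure_iUnion_null hzero] at hinf
  exact ENNReal.zero_ne_top hinf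

end Shift

section VisitSet

variable {d : ℕ}

/-- The set of points `x` such that `ψ`, seen from `x`, lies in `B`. A translation-covariant
selection `S` has this form, with `B = {ψ | 0 ∈ S_ψ}`. -/
def visitSet (B : Set (Measure (Vec d))) (ψ : Measure (Vec d)) : Set (Vec d) :=
  {x | shiftM x ψ ∈ B}

lemma mem_visitSet {B : Set (Measure (Vec d))} {ψ : Measure (Vec d)} {x : Vec d} :
    x ∈ visitSet B ψ ↔ shiftM x ψ ∈ B :=
  Iff.rfl

lemma visitSet_shiftM (B : Set (Measure (Vec d))) (t : Vec d) (ψ : Measure (Vec d)) :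
    visitSet B (shiftM t ψ) = (· + t) ⁻¹' visitSet B ψ := by
  ext x
  simp only [mem_visitSet, shiftM_shiftM, Set.mem_preimage]

lemma shiftM_visitSet (B : Set (Measure (Vec d))) (t : Vec d) (ψ : Measure (Vec d)) :
    shiftM t ψ (visitSet B (shiftM t ψ)) = ψ (visitSet B ψ) := by
  simp only [shiftM_apply, visitSet_shiftM, Set.preimage_preimage, sub_add_cancel,
    Set.preimage_id']

variable {B : Set (Measure (Vec d))}

lemma visitSet_setOf_isBounded_inter_ball {ψ : Measure (Vec d)}
    (hψ : Bornology.IsBounded (visitSet B ψ)) (r : ℝ) :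
    visitSet {φ | Bornology.IsBounded (visitSet B φ) ∧ (visitSet B φ ∩ Metric.ball 0 r).Nonempty} ψ
      = Metric.thickening r (visitSet B ψ) := by
  ext x
  simp only [mem_visitSet (x := x), Set.mem_ofPred_eq, visitSet_shiftM, Metric.mem_thickening_iff]
  have hbdd : Bornology.IsBounded ((· + x) ⁻¹' visitSet B ψ) :=
    (IsometryEquiv.addRight x).isometry.antilipschitz.isBounded_preimage hψ
  constructor
  · rintro ⟨-, z, hz, hzr⟩
    exact ⟨z + x, hz, by simpa [dist_eq_norm] using hzr⟩
  · rintro ⟨z, hz, hzr⟩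
    exact ⟨hbdd, z - x, by simpa using hz, by rwa [mem_ball_zero_iff, ← dist_eq_norm']⟩

lemma measurableSet_setOf_mem_visitSet_bddFinitePart (hB : MeasurableSet B) :
    MeasurableSet {p : Measure (Vec d) × Vec d | p.2 ∈ visitSet B (bddFinitePart p.1)} :=
  measurable_shiftM_bddFinitePart hB

lemma measurableSet_visitSet_of_bddFinite (hB : MeasurableSet B) {ψ : Measure (Vec d)}
    (hψ : BddFinite ψ) : MeasurableSet (visitSet B ψ) := by
  rw [← bddFinitePart_of_bddFinite hψ]
  exact measurable_prodMk_left (measurableSet_setOf_mem_visitSet_bddFinitePart hB)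

lemma measurable_bddFinitePart_visitSet (hB : MeasurableSet B) :
    Measurable fun ψ ↦ bddFinitePart ψ (visitSet B (bddFinitePart ψ)) :=
  measurable_bddFinitePart_prodMk_left measurable_id
    (measurableSet_setOf_mem_visitSet_bddFinitePart hB)

lemma nullMeasurableSet_visitSet_inter_nonempty (hB : MeasurableSet B) {C : Set (Vec d)}
    (hC : MeasurableSet C) {Q : Measure (Measure (Vec d))} [SFinite Q]
    (hQ : ∀ᵐ ψ ∂Q, BddFinite ψ) : NullMeasurableSet {ψ | (visitSet B ψ ∩ C).Nonempty} Q := by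
  have hgraph := (measurableSet_setOf_mem_visitSet_bddFinitePart hB).inter (measurable_snd hC)
  refine (nullMeasurableSet_image_fst hgraph Q).congr ?_
  filter_upwards [hQ] with ψ hψ
  refine propext ?_
  change ψ ∈ Prod.fst '' _ ↔ (visitSet B ψ ∩ C).Nonempty
  simp [Set.Nonempty, bddFinitePart_of_bddFinite hψ]

lemma nullMeasurableSet_isBounded_visitSet (hB : MeasurableSet B)
    {Q : Measure (Measure (Vec d))} [SFinite Q] (hQ : ∀ᵐ ψ ∂Q, BddFinite ψ) :
    NullMeasurableSet {ψ | Bornology.IsBounded (visitSet B ψ)} Q := by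
  have hiff (S : Set (Vec d)) :
      Bornology.IsBounded S ↔ ∃ n : ℕ, ¬(S ∩ (Metric.closedBall 0 n)ᶜ).Nonempty := by
    simp only [Set.inter_compl_nonempty_iff, not_not]
    exact isBounded_iff_exists_nat_subset_closedBall 0
  simp_rw [hiff, Set.ofPred_exists]
  exact .iUnion fun n ↦ (nullMeasurableSet_visitSet_inter_nonempty hB
    measurableSet_closedBall.compl hQ).compl

end VisitSet

section MassStationary

variable {d : ℕ} {Ω : Type*} [MeasurableSpace Ω] {P : Measure Ω} {Ψ : Ω → Measure (Vec d)}
  {B : Set (Measure (Vec d))}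

lemma aemeasurable_measure_visitSet (hΨm : Measurable Ψ) (hbf : ∀ᵐ ω ∂P, BddFinite (Ψ ω))
    (hB : MeasurableSet B) : AEMeasurable (fun ω ↦ Ψ ω (visitSet B (Ψ ω))) P := by
  refine ((measurable_bddFinitePart_visitSet hB).comp hΨm).aemeasurable.congr ?_
  filter_upwards [hbf] with ω hω
  simp only [Function.comp_apply, bddFinitePart_of_bddFinite hω]

lemma lintegral_indicator_const_shiftM (hB : MeasurableSet B) {ψ : Measure (Vec d)}
    (hψ : BddFinite ψ) (c : ℝ≥0∞) :
    ∫⁻ y, B.indicator (fun _ ↦ c) (shiftM y ψ) ∂ψ = c * ψ (visitSet B ψ) :=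
  lintegral_indicator_const (measurableSet_visitSet_of_bddFinite hB hψ) c

lemma lintegral_lintegral_shiftM (hbf : ∀ᵐ ω ∂P, BddFinite (Ψ ω)) (hms : MassStationary P Ψ)
    {F : Measure (Vec d) → ℝ≥0∞} (hF : Measurable F) :
    ∫⁻ ω, ∫⁻ y, F (shiftM y (Ψ ω)) ∂Ψ ω ∂P = ∫⁻ ω, F (Ψ ω) * Ψ ω Set.univ ∂P := by
  have hmeas : Measurable fun p : Measure (Vec d) × Vec d × Vec d ↦
      F (shiftM p.2.2 (bddFinitePart p.1)) :=
    hF.comp (measurable_shiftM_bddFinitePart.comp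
      (measurable_fst.prodMk (measurable_snd.comp measurable_snd)))
  have hcov : Covariant3 fun ψ (_ y : Vec d) ↦ F (shiftM y (bddFinitePart ψ)) := by
    intro t _ y ψ
    simp only [bddFinitePart_shiftM, shiftM_shiftM, sub_add_cancel]
  calc
    _ = ∫⁻ ω, ∫⁻ y, F (shiftM y (bddFinitePart (Ψ ω))) ∂Ψ ω ∂P := by
      refine lintegral_congr_ae ?_
      filter_upwards [hbf] with ω hω
      rw [bddFinitePart_of_bddFinite hω]
    _ = ∫⁻ ω, ∫⁻ _, F (shiftM 0 (bddFinitePart (Ψ ω))) ∂Ψ ω ∂P := hms _ hmeas hcov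
    _ = _ := by
      refine lintegral_congr_ae ?_
      filter_upwards [hbf] with ω hω
      rw [lintegral_const, shiftM_zero, bddFinitePart_of_bddFinite hω]

lemma lintegral_lintegral_shiftM_eq_zero_or_top (hΨm : Measurable Ψ)
    (hbf : ∀ᵐ ω ∂P, BddFinite (Ψ ω)) (hinf : ∀ᵐ ω ∂P, Ψ ω Set.univ = ⊤)
    (hms : MassStationary P Ψ) {F : Measure (Vec d) → ℝ≥0∞} (hF : Measurable F) :
    ∫⁻ ω, ∫⁻ y, F (shiftM y (Ψ ω)) ∂Ψ ω ∂P = 0 ∨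
      ∫⁻ ω, ∫⁻ y, F (shiftM y (Ψ ω)) ∂Ψ ω ∂P = ⊤ := by
  have htop : ∫⁻ ω, F (Ψ ω) * Ψ ω Set.univ ∂P = (∫⁻ ω, F (Ψ ω) ∂P) * ⊤ := by
    rw [← lintegral_mul_const ⊤ (show Measurable fun ω ↦ F (Ψ ω) from hF.comp hΨm)]
    refine lintegral_congr_ae ?_
    filter_upwards [hinf] with ω hω
    rw [hω]
  rw [lintegral_lintegral_shiftM hbf hms hF, htop, ENNReal.mul_top']
  exact ite_eq_or_eq _ _ _

lemma ae_measure_visitSet_eq_zero (hΨm : Measurable Ψ) (hbf : ∀ᵐ ω ∂P, BddFinite (Ψ ω))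
    (hms : MassStationary P Ψ) (hB : P.map Ψ B = 0) :
    ∀ᵐ ω ∂P, Ψ ω (visitSet B (Ψ ω)) = 0 := by
  obtain ⟨N, hBN, hN, hN0⟩ := exists_measurable_superset_of_null hB
  have hint : ∫⁻ ω, Ψ ω (visitSet N (Ψ ω)) ∂P = 0 := calc
    _ = ∫⁻ ω, ∫⁻ y, N.indicator (fun _ ↦ 1) (shiftM y (Ψ ω)) ∂Ψ ω ∂P := by
      refine lintegral_congr_ae ?_
      filter_upwards [hbf] with ω hω
      rw [lintegral_indicator_const_shiftM hN hω, one_mul]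
    _ = ∫⁻ ω, N.indicator (fun _ ↦ 1) (Ψ ω) * Ψ ω Set.univ ∂P :=
      lintegral_lintegral_shiftM hbf hms (measurable_const.indicator hN)
    _ = ∫⁻ _, 0 ∂P := by
      refine lintegral_congr_ae ?_
      filter_upwards [ae_of_ae_map hΨm.aemeasurable (measure_eq_zero_iff_ae_notMem.1 hN0)] with ω hω
      rw [Set.indicator_of_notMem hω, zero_mul]
    _ = 0 := lintegral_zero
  filter_upwards [(lintegral_eq_zero_iff' (aemeasurable_measure_visitSet hΨm hbf hN)).1 hint]
    with ω hω
  exact measure_mono_null (fun x hx ↦ hBN hx) hω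

lemma ae_measure_visitSet_eq_zero_or_top [IsFiniteMeasure P] (hΨm : Measurable Ψ)
    (hbf : ∀ᵐ ω ∂P, BddFinite (Ψ ω)) (hinf : ∀ᵐ ω ∂P, Ψ ω Set.univ = ⊤)
    (hms : MassStationary P Ψ) (hB : MeasurableSet B) :
    ∀ᵐ ω ∂P, Ψ ω (visitSet B (Ψ ω)) = 0 ∨ Ψ ω (visitSet B (Ψ ω)) = ⊤ := by
  let m (ω : Ω) : ℝ≥0∞ := Ψ ω (visitSet B (Ψ ω))
  have hm : AEMeasurable m P := aemeasurable_measure_visitSet hΨm hbf hB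
  let F : Measure (Vec d) → ℝ≥0∞ :=
    B.indicator fun ψ ↦ (bddFinitePart ψ (visitSet B (bddFinitePart ψ)))⁻¹
  have hF : Measurable F := (measurable_bddFinitePart_visitSet hB).inv.indicator hB
  have hFm : ∫⁻ ω, ∫⁻ y, F (shiftM y (Ψ ω)) ∂Ψ ω ∂P = ∫⁻ ω, (m ω)⁻¹ * m ω ∂P := by
    refine lintegral_congr_ae ?_
    filter_upwards [hbf] with ω hω
    rw [← lintegral_indicator_const_shiftM hB hω]
    refine lintegral_congr fun y ↦ ?_
    simp only [F, m, Set.indicator, bddFinitePart_shiftM, bddFinitePart_of_bddFinite hω,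
      shiftM_visitSet]
  have hfin : ∫⁻ ω, (m ω)⁻¹ * m ω ∂P ≠ ⊤ := ne_top_of_le_ne_top (measure_ne_top P Set.univ) <| by
    simpa using lintegral_mono fun ω ↦ ENNReal.inv_mul_le_one (m ω)
  have hzero : ∫⁻ ω, (m ω)⁻¹ * m ω ∂P = 0 := by
    rw [← hFm] at hfin ⊢
    exact (lintegral_lintegral_shiftM_eq_zero_or_top hΨm hbf hinf hms hF).resolve_right hfin
  filter_upwards [(lintegral_eq_zero_iff' (hm.inv.mul hm)).1 hzero] with ω hω
  simpa [or_comm] using hω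

lemma ae_measure_visitSet_eq_zero_or_top₀ [IsFiniteMeasure P] (hΨm : Measurable Ψ)
    (hbf : ∀ᵐ ω ∂P, BddFinite (Ψ ω)) (hinf : ∀ᵐ ω ∂P, Ψ ω Set.univ = ⊤)
    (hms : MassStationary P Ψ) (hB : NullMeasurableSet B (P.map Ψ)) :
    ∀ᵐ ω ∂P, Ψ ω (visitSet B (Ψ ω)) = 0 ∨ Ψ ω (visitSet B (Ψ ω)) = ⊤ := by
  obtain ⟨B', hB', hBB'⟩ := hB
  have hdiff : P.map Ψ {ψ | ¬(ψ ∈ B ↔ ψ ∈ B')} = 0 := hBB'.mem_iff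
  filter_upwards [ae_measure_visitSet_eq_zero_or_top hΨm hbf hinf hms hB',
    ae_measure_visitSet_eq_zero hΨm hbf hms hdiff] with ω hω hdiffω
  have hae : visitSet B (Ψ ω) =ᵐ[Ψ ω] visitSet B' (Ψ ω) :=
    Filter.eventuallyEq_set.2 (ae_iff.2 hdiffω)
  rwa [measure_congr hae]

lemma ae_visitSet_eq_empty_or_not_isBounded [IsFiniteMeasure P] (hΨm : Measurable Ψ)
    (hbf : ∀ᵐ ω ∂P, BddFinite (Ψ ω)) (hinf : ∀ᵐ ω ∂P, Ψ ω Set.univ = ⊤)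
    (hms : MassStationary P Ψ) (hB : MeasurableSet B) :
    ∀ᵐ ω ∂P, visitSet B (Ψ ω) = ∅ ∨ ¬Bornology.IsBounded (visitSet B (Ψ ω)) := by
  have hbf' : ∀ᵐ ψ ∂P.map Ψ, BddFinite ψ :=
    (ae_map_iff hΨm.aemeasurable measurableSet_setOf_bddFinite).2 hbf
  have hthick (n : ℕ) := ae_measure_visitSet_eq_zero_or_top₀ hΨm hbf hinf hms
    ((nullMeasurableSet_isBounded_visitSet hB hbf').inter
      (nullMeasurableSet_visitSet_inter_nonempty hB (measurableSet_ball (x := 0) (ε := n)) hbf'))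
  filter_upwards [hbf, hinf, ae_all_iff.2 hthick] with ω hω hinfω hthickω
  refine or_not_of_imp fun hbdd ↦ eq_empty_of_forall_measure_thickening hω hinfω hbdd fun n ↦ ?_
  rw [← visitSet_setOf_isBounded_inter_ball hbdd]
  exact hthickω n

end MassStationary

/-- bounded selection.  Let `Ψ` be a mass-stationary random measure on `ℝ^d`
with total mass `∞` a.s., and let `f : M(ℝ^d) × ℝ^d → {0,1}` be measurable and
translation-covariant; write `S_ψ := {x | f ψ x = 1}`.  Then a.s. `S_Ψ` is empty or unbounded,
and a.s. `Ψ(S_Ψ) ∈ {0, ∞}`. -/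
theorem stmt8 {d : ℕ} {Ω : Type*} [MeasurableSpace Ω] (P : Measure Ω) [IsProbabilityMeasure P]
    (Ψ : Ω → Measure (Vec d)) (hΨm : Measurable Ψ)
    (hbf : ∀ᵐ ω ∂P, BddFinite (Ψ ω))
    (hinf : ∀ᵐ ω ∂P, Ψ ω Set.univ = ⊤)
    (hms : MassStationary P Ψ)
    (f : Measure (Vec d) → Vec d → Bool)
    (hfm : Measurable (fun p : Measure (Vec d) × Vec d => f p.1 p.2))
    (hfcov : ∀ (t x : Vec d) (ψ : Measure (Vec d)), f (shiftM t ψ) (x - t) = f ψ x) :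
    (∀ᵐ ω ∂P, {x | f (Ψ ω) x = true} = ∅ ∨ ¬ Bornology.IsBounded {x | f (Ψ ω) x = true}) ∧
    (∀ᵐ ω ∂P, Ψ ω {x | f (Ψ ω) x = true} = 0 ∨ Ψ ω {x | f (Ψ ω) x = true} = ⊤) := by
  have hB : MeasurableSet {ψ | f ψ 0 = true} :=
    measurableSet_eq_fun (hfm.comp measurable_prodMk_right) measurable_const
  have hvisit (ψ : Measure (Vec d)) : {x | f ψ x = true} = visitSet {φ | f φ 0 = true} ψ := by
    ext x
    rw [mem_visitSet, Set.mem_ofPred, Set.mem_ofPred, ← hfcov x x ψ, sub_self]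
  simp only [hvisit]
  exact ⟨ae_visitSet_eq_empty_or_not_isBounded hΨm hbf hinf hms hB,
    ae_measure_visitSet_eq_zero_or_top hΨm hbf hinf hms hB⟩
end
end

section
/- Let Φ be a stationary random measure on ℝ^d with intensity λ_Φ := E[Φ([0,1)^d)] ∈ (0,∞). Then there exists a unique σ-finite measure Q on M(ℝ^d) such that for every measurable function g : ℝ^d × M(ℝ^d) → [0,∞], E[∫ g(x, T_xΦ) dΦ(x)] = ∫_{ℝ^d} ∫_{M(ℝ^d)} g(x, ψ) dQ(ψ) dx; moreover Q has total mass λ_Φ. -/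
open MeasureTheory ENNReal

noncomputable section

/-- The unit box `[0,1)^d`. -/
def unitBox (d : ℕ) : Set (Vec d) := Set.univ.pi fun _ : Fin d => Set.Ico (0 : ℝ) 1


/-! By stationarity the Campbell measure `C(D) = E ∫ 1_D(x, T_x Φ) dΦ(x)` on `ℝ^d × M(ℝ^d)` is
invariant under translations of its first coordinate. For each measurable `A` the measure
`C(· × A)` is therefore translation invariant, and it is σ-finite since it is dominated by the
invariant intensity measure `E Φ`; so it is a multiple of Lebesgue measure, and `C` factors as
`dx ⊗ Q`. Testing against `1_B ⊗ 1_A` with `0 < |B| < ∞` recovers `Q A` from `C`.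

The same argument works on every second countable locally compact abelian group, with Haar measure
in place of Lebesgue measure. -/

open ProbabilityTheory Set

section SFiniteKernel

variable {α β : Type*} [MeasurableSpace α] [MeasurableSpace β] (κ : Kernel α β)

-- Normalise each `κ a` to mass at most one, and put its mass back as a density.
theorem isSFiniteKernel_of_forall_isFiniteMeasure [∀ a, IsFiniteMeasure (κ a)] :
    IsSFiniteKernel κ := by
  have mass_meas : Measurable fun a => κ a univ := κ.measurable_coe .univ
  let normalized : Kernel α β :=
    { toFun := fun a => (κ a univ)⁻¹ • κ a
      measurable' := Measure.measurable_of_measurable_coe _ fun s hs =>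
        mass_meas.inv.mul (κ.measurable_coe hs) }
  have : IsFiniteKernel normalized :=
    ⟨1, one_lt_top, fun a => ENNReal.inv_mul_le_one (κ a univ)⟩
  have density_meas : Measurable (Function.uncurry fun a (_ : β) => κ a univ) :=
    mass_meas.comp measurable_fst
  have eq_withDensity : κ = normalized.withDensity fun a _ => κ a univ := by
    ext a : 1
    rw [Kernel.withDensity_apply _ density_meas, withDensity_const]
    change κ a = κ a univ • (κ a univ)⁻¹ • κ a
    rcases eq_or_ne (κ a) 0 with zero | ne_zero
    · simp [zero]
    · rw [smul_smul, ENNReal.mul_inv_cancel (by simpa using ne_zero) (measure_ne_top _ _), one_smul]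
  rw [eq_withDensity]
  exact Kernel.IsSFiniteKernel.withDensity _ fun a _ => measure_ne_top (κ a) univ

theorem isSFiniteKernel_of_forall_measure_lt_top {s : ℕ → Set β}
    (hs : ∀ n, MeasurableSet (s n)) (hs_univ : ⋃ n, s n = univ)
    (hκ : ∀ a n, κ a (s n) < ∞) : IsSFiniteKernel κ := by
  have meas : ∀ n, MeasurableSet (disjointed s n) := .disjointed hs
  have eq_sum : κ = Kernel.sum fun n => κ.restrict (meas n) := by
    ext a : 1
    simp only [Kernel.sum_apply, Kernel.restrict_apply]
    rw [← Measure.restrict_iUnion (disjoint_disjointed s) meas, iUnion_disjointed, hs_univ,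
      Measure.restrict_univ]
  have piece_sfinite (n : ℕ) : IsSFiniteKernel (κ.restrict (meas n)) := by
    have (a : α) : IsFiniteMeasure (κ.restrict (meas n) a) := by
      rw [Kernel.restrict_apply]
      exact isFiniteMeasure_restrict.2
        ((measure_mono (disjointed_subset s n)).trans_lt (hκ a n)).ne
    exact isSFiniteKernel_of_forall_isFiniteMeasure _
  rw [eq_sum]
  exact Kernel.isSFiniteKernel_sum

end SFiniteKernel

section Shift

variable {G : Type*} [AddGroup G] [MeasurableSpace G]

/-- The shift `T_t ψ` of a measure on a group, `(T_t ψ)(A) = ψ(A + t)`; on `Vec d` it is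
definitionally equal to `shiftM`. -/
def shift (t : G) (ψ : Measure G) : Measure G :=
  ψ.map fun x => x - t

theorem measurable_shift [MeasurableSub G] (t : G) : Measurable (shift t) :=
  Measure.measurable_map _ (measurable_sub_const t)

theorem shift_shift [MeasurableSub G] (s t : G) (ψ : Measure G) :
    shift s (shift t ψ) = shift (s + t) ψ := by
  rw [shift, shift, shift, Measure.map_map (measurable_sub_const s) (measurable_sub_const t)]
  simp only [Function.comp_def, sub_add_eq_sub_sub_swap]

theorem shift_zero (ψ : Measure G) : shift 0 ψ = ψ := by
  simp [shift]

theorem measurable_shift_kernel [MeasurableSub₂ G] {α : Type*} [MeasurableSpace α]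
    (κ : Kernel α G) [IsSFiniteKernel κ] :
    Measurable fun p : α × G => shift p.2 (κ p.1) := by
  refine Measure.measurable_of_measurable_coe _ fun s hs => ?_
  have preimage_meas : MeasurableSet {q : (α × G) × G | q.2 - q.1.2 ∈ s} :=
    (measurable_snd.sub measurable_fst.snd) hs
  have apply_eq (p : α × G) : shift p.2 (κ p.1) s =
      κ.prodMkRight G p (Prod.mk p ⁻¹' {q | q.2 - q.1.2 ∈ s}) :=
    Measure.map_apply (measurable_sub_const p.2) hs
  simpa only [apply_eq] using Kernel.measurable_kernel_prodMk_left preimage_meas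

end Shift

section RadonKernel

variable {X : Type*} [TopologicalSpace X] [MeasurableSpace X]

theorem isFiniteMeasureOnCompacts_iff_forall_interior (K : CompactExhaustion X) (ψ : Measure X) :
    IsFiniteMeasureOnCompacts ψ ↔ ∀ n, ψ (interior (K n)) < ∞ := by
  refine ⟨fun _ n => (measure_mono interior_subset).trans_lt (K.isCompact n).measure_lt_top,
    fun h => ⟨fun L hL => ?_⟩⟩
  obtain ⟨n, hn⟩ := K.exists_superset_of_isCompact hL
  exact (measure_mono (hn.trans (K.subset_interior_succ n))).trans_lt (h (n + 1))

variable [WeaklyLocallyCompactSpace X] [SigmaCompactSpace X] [OpensMeasurableSpace X]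

theorem measurableSet_isFiniteMeasureOnCompacts :
    MeasurableSet {ψ : Measure X | IsFiniteMeasureOnCompacts ψ} := by
  simp only [isFiniteMeasureOnCompacts_iff_forall_interior (CompactExhaustion.choice X),
    Set.ofPred_forall]
  exact .iInter fun n => measurableSet_lt
    (Measure.measurable_coe isOpen_interior.measurableSet) measurable_const

theorem ae_isFiniteMeasureOnCompacts_of_bind {Ω : Type*} [MeasurableSpace Ω]
    {P : Measure Ω} {Φ : Ω → Measure X} (hΦ : Measurable Φ)
    [IsFiniteMeasureOnCompacts (P.bind Φ)] : ∀ᵐ ω ∂P, IsFiniteMeasureOnCompacts (Φ ω) := by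
  let K := CompactExhaustion.choice X
  have interior_meas (n : ℕ) : MeasurableSet (interior (K n)) := isOpen_interior.measurableSet
  have finite_mean (n : ℕ) : ∫⁻ ω, Φ ω (interior (K n)) ∂P ≠ ∞ := by
    rw [← Measure.bind_apply (interior_meas n) hΦ.aemeasurable]
    exact ((measure_mono interior_subset).trans_lt (K.isCompact n).measure_lt_top).ne
  have finite_ae (n : ℕ) : ∀ᵐ ω ∂P, Φ ω (interior (K n)) < ∞ :=
    ae_lt_top ((Measure.measurable_coe (interior_meas n)).comp hΦ) (finite_mean n)
  filter_upwards [ae_all_iff.2 finite_ae] with ω hω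
  exact (isFiniteMeasureOnCompacts_iff_forall_interior K _).2 hω

variable (X) in
open Classical in
/-- The identity `ψ ↦ ψ` as a kernel from measures to points, set to zero off the measures that
are finite on compacts: this makes it s-finite, as joint measurability statements need. -/
def radonKernel : Kernel (Measure X) X where
  toFun ψ := if IsFiniteMeasureOnCompacts ψ then ψ else 0
  measurable' :=
    .ite measurableSet_isFiniteMeasureOnCompacts measurable_id measurable_const

theorem radonKernel_of_isFiniteMeasureOnCompacts (ψ : Measure X) [h : IsFiniteMeasureOnCompacts ψ] :
    radonKernel X ψ = ψ :=
  if_pos h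

theorem radonKernel_of_not_isFiniteMeasureOnCompacts {ψ : Measure X}
    (h : ¬IsFiniteMeasureOnCompacts ψ) : radonKernel X ψ = 0 :=
  if_neg h

instance isFiniteMeasureOnCompacts_radonKernel (ψ : Measure X) :
    IsFiniteMeasureOnCompacts (radonKernel X ψ) := by
  by_cases h : IsFiniteMeasureOnCompacts ψ
  · rwa [radonKernel_of_isFiniteMeasureOnCompacts ψ]
  · rw [radonKernel_of_not_isFiniteMeasureOnCompacts h]
    infer_instance

instance isSFiniteKernel_radonKernel : IsSFiniteKernel (radonKernel X) := by
  let K := CompactExhaustion.choice X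
  refine isSFiniteKernel_of_forall_measure_lt_top _ (s := fun n => interior (K n))
    (fun n => isOpen_interior.measurableSet) (eq_univ_of_forall fun x => ?_)
    fun ψ => (isFiniteMeasureOnCompacts_iff_forall_interior K _).1 inferInstance
  obtain ⟨n, hn⟩ := K.exists_mem x
  exact mem_iUnion_of_mem (n + 1) (K.subset_interior_succ n hn)

end RadonKernel

section RadonKernelShift

variable {G : Type*} [AddGroup G] [TopologicalSpace G] [IsTopologicalAddGroup G]
  [MeasurableSpace G] [BorelSpace G]

theorem isFiniteMeasureOnCompacts_shift (t : G) (ψ : Measure G) [IsFiniteMeasureOnCompacts ψ] :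
    IsFiniteMeasureOnCompacts (shift t ψ) :=
  Measure.IsFiniteMeasureOnCompacts.map ψ (Homeomorph.subRight t)

theorem isFiniteMeasureOnCompacts_shift_iff (t : G) (ψ : Measure G) :
    IsFiniteMeasureOnCompacts (shift t ψ) ↔ IsFiniteMeasureOnCompacts ψ := by
  refine ⟨fun _ => ?_, fun _ => isFiniteMeasureOnCompacts_shift t ψ⟩
  have := isFiniteMeasureOnCompacts_shift (-t) (shift t ψ)
  rwa [shift_shift, neg_add_cancel, shift_zero] at this

theorem radonKernel_shift [WeaklyLocallyCompactSpace G] [SigmaCompactSpace G]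
    (t : G) (ψ : Measure G) :
    radonKernel G (shift t ψ) = shift t (radonKernel G ψ) := by
  by_cases h : IsFiniteMeasureOnCompacts ψ
  · have := isFiniteMeasureOnCompacts_shift t ψ
    simp only [radonKernel_of_isFiniteMeasureOnCompacts]
  · have h_shift := (isFiniteMeasureOnCompacts_shift_iff t ψ).not.2 h
    rw [radonKernel_of_not_isFiniteMeasureOnCompacts h,
      radonKernel_of_not_isFiniteMeasureOnCompacts h_shift, shift, Measure.map_zero]

end RadonKernelShift

section Campbell

variable {G α : Type*} [AddGroup G] [MeasurableSpace G] [MeasurableSpace α]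

/-- The Campbell measure `C(D) = ∫ ∫ 1_D(x, T_x κ_a) dκ_a(x) dP(a)` of a random measure `κ`, whose
second coordinate is `κ` seen from the sampled point `x`. -/
def campbellMeasure (P : Measure α) (κ : Kernel α G) : Measure (G × Measure G) :=
  (P ⊗ₘ κ).map fun p => (p.2, shift p.2 (κ p.1))

variable [MeasurableSub₂ G] (P : Measure α) [SFinite P] (κ : Kernel α G) [IsSFiniteKernel κ]

theorem measurable_lintegral_shift_kernel {g : G × Measure G → ℝ≥0∞} (hg : Measurable g) :
    Measurable fun a => ∫⁻ x, g (x, shift x (κ a)) ∂κ a :=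
  (hg.comp (measurable_snd.prodMk (measurable_shift_kernel κ))).lintegral_kernel_prod_right'

theorem lintegral_campbellMeasure {g : G × Measure G → ℝ≥0∞} (hg : Measurable g) :
    ∫⁻ p, g p ∂campbellMeasure P κ = ∫⁻ a, ∫⁻ x, g (x, shift x (κ a)) ∂κ a ∂P := by
  have pair_meas : Measurable fun p : α × G => (p.2, shift p.2 (κ p.1)) :=
    measurable_snd.prodMk (measurable_shift_kernel κ)
  rw [campbellMeasure, lintegral_map hg pair_meas]
  exact Measure.lintegral_compProd (hg.comp pair_meas)

theorem fst_campbellMeasure : (campbellMeasure P κ).fst = P.bind κ := by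
  rw [campbellMeasure, Measure.fst_map_prodMk (measurable_shift_kernel κ)]
  exact Measure.snd_compProd P κ

-- Seen from `x - t`, the measure `T_t κ_a` is `κ_a` seen from `x`.
theorem map_sub_campbellMeasure {t : G} {θ : α → α} (hθ : MeasurePreserving θ P P)
    (hκ : ∀ a, κ (θ a) = shift t (κ a)) :
    (campbellMeasure P κ).map (Prod.map (fun x => x - t) id) = campbellMeasure P κ := by
  refine Measure.ext_of_lintegral _ fun g hg => ?_
  have sub_meas : Measurable (Prod.map (fun x : G => x - t) (id : Measure G → Measure G)) :=
    (measurable_sub_const t).prodMap measurable_id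
  have inner_eq (a : α) : ∫⁻ x, g (x, shift x (κ (θ a))) ∂κ (θ a) =
      ∫⁻ x, g (x - t, shift x (κ a)) ∂κ a := by
    have integrand_meas : Measurable fun x => g (x, shift x (κ (θ a))) :=
      hg.comp (measurable_id.prodMk ((measurable_shift_kernel κ).comp measurable_prodMk_left))
    calc ∫⁻ x, g (x, shift x (κ (θ a))) ∂κ (θ a)
        = ∫⁻ x, g (x, shift x (κ (θ a))) ∂(κ a).map fun x => x - t := by rw [hκ, shift]
      _ = ∫⁻ x, g (x - t, shift x (κ a)) ∂κ a := by
          rw [lintegral_map integrand_meas (measurable_sub_const t)]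
          simp only [hκ, shift_shift, sub_add_cancel]
  calc ∫⁻ p, g p ∂(campbellMeasure P κ).map (Prod.map (fun x => x - t) id)
      = ∫⁻ a, ∫⁻ x, g (x - t, shift x (κ a)) ∂κ a ∂P := by
        rw [lintegral_map hg sub_meas]
        exact lintegral_campbellMeasure P κ (hg.comp sub_meas)
    _ = ∫⁻ a, ∫⁻ x, g (x, shift x (κ (θ a))) ∂κ (θ a) ∂P := by simp only [inner_eq]
    _ = ∫⁻ p, g p ∂campbellMeasure P κ := by
        rw [hθ.lintegral_comp (measurable_lintegral_shift_kernel κ hg),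
          lintegral_campbellMeasure P κ hg]

end Campbell

section InvariantProduct

variable {G E : Type*} [MeasurableSpace G] [MeasurableSpace E]

theorem fst_restrict_snd_preimage_apply (C : Measure (G × E)) {s : Set G} (hs : MeasurableSet s)
    (A : Set E) : (C.restrict (Prod.snd ⁻¹' A)).fst s = C (s ×ˢ A) := by
  rw [Measure.fst_apply hs, Measure.restrict_apply (measurable_fst hs), prod_eq]

theorem snd_restrict_fst_preimage_apply (C : Measure (G × E)) (s : Set G) {A : Set E}
    (hA : MeasurableSet A) : (C.restrict (Prod.fst ⁻¹' s)).snd A = C (s ×ˢ A) := by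
  rw [Measure.snd_apply hA, Measure.restrict_apply (measurable_snd hA), inter_comm, prod_eq]

variable [AddGroup G] [MeasurableAdd₂ G]

theorem isAddLeftInvariant_fst_restrict {C : Measure (G × E)}
    (hC : ∀ t : G, C.map (Prod.map (fun x => t + x) id) = C) {A : Set E} (hA : MeasurableSet A) :
    (C.restrict (Prod.snd ⁻¹' A)).fst.IsAddLeftInvariant := by
  refine ⟨fun t => Measure.ext fun s hs => ?_⟩
  have add_meas : Measurable fun x : G => t + x := measurable_const_add t
  rw [Measure.map_apply add_meas hs, fst_restrict_snd_preimage_apply C hs,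
    fst_restrict_snd_preimage_apply C (add_meas hs)]
  conv_rhs => rw [← hC t, Measure.map_apply (add_meas.prodMap measurable_id) (hs.prod hA)]
  rfl

theorem exists_eq_prod_of_map_add_left [MeasurableNeg G] {C : Measure (G × E)} [SigmaFinite C.fst]
    (hC : ∀ t : G, C.map (Prod.map (fun x => t + x) id) = C)
    (μ : Measure G) [SigmaFinite μ] [μ.IsAddLeftInvariant]
    {B : Set G} (hB : MeasurableSet B) (hB_zero : μ B ≠ 0) (hB_top : μ B ≠ ∞)
    (hCB : C.fst B ≠ ∞) :
    ∃ Q : Measure E, IsFiniteMeasure Q ∧ C = μ.prod Q := by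
  let Q : Measure E := (μ B)⁻¹ • (C.restrict (Prod.fst ⁻¹' B)).snd
  have Q_apply {A : Set E} (hA : MeasurableSet A) : Q A = (μ B)⁻¹ * C (B ×ˢ A) := by
    rw [Measure.smul_apply, smul_eq_mul, snd_restrict_fst_preimage_apply C B hA]
  have Q_finite : IsFiniteMeasure Q := by
    refine ⟨?_⟩
    rw [Q_apply .univ, prod_univ, ← Measure.fst_apply hB]
    exact ENNReal.mul_lt_top (ENNReal.inv_lt_top.2 hB_zero.bot_lt) hCB.lt_top
  refine ⟨Q, Q_finite, (Measure.prod_eq fun s A hs hA => ?_).symm⟩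
  let ν : Measure G := (C.restrict (Prod.snd ⁻¹' A)).fst
  have ν_invariant : ν.IsAddLeftInvariant := isAddLeftInvariant_fst_restrict hC hA
  have ν_sigmaFinite : SigmaFinite ν :=
    Measure.sigmaFinite_of_le C.fst (Measure.map_mono Measure.restrict_le_self measurable_fst)
  calc C (s ×ˢ A) = ν s := (fst_restrict_snd_preimage_apply C hs A).symm
    _ = (μ B)⁻¹ * (μ B * ν s) := by
        rw [← mul_assoc, ENNReal.inv_mul_cancel hB_zero hB_top, one_mul]
    _ = (μ B)⁻¹ * (ν B * μ s) := by
        rw [measure_add_measure_eq ν μ B s hB_zero hB_top]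
    _ = μ s * Q A := by
        rw [fst_restrict_snd_preimage_apply C hB, Q_apply hA, ← mul_assoc, mul_comm]

end InvariantProduct

section Palm

variable {G Ω : Type*} [AddGroup G] [MeasurableSpace G] [MeasurableSpace Ω]

/-- The random measure `Φ` on `(Ω, P)` is stationary: its law is invariant under all shifts. -/
def IsStationaryRandomMeasure (P : Measure Ω) (Φ : Ω → Measure G) : Prop :=
  ∀ t : G, P.map (fun ω => shift t (Φ ω)) = P.map Φ

/-- `Q` is a Palm measure of the random measure `Φ` on `(Ω, P)` with respect to the reference
measure `μ`, in the sense that the refined Campbell formula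
`E ∫ g(x, T_x Φ) dΦ(x) = ∫ ∫ g(x, ψ) dQ(ψ) dμ(x)` holds. -/
def IsPalmMeasure (P : Measure Ω) (Φ : Ω → Measure G) (μ : Measure G) (Q : Measure (Measure G)) :
    Prop :=
  ∀ g : G → Measure G → ℝ≥0∞, Measurable (fun p : G × Measure G => g p.1 p.2) →
    ∫⁻ ω, ∫⁻ x, g x (shift x (Φ ω)) ∂Φ ω ∂P = ∫⁻ x, ∫⁻ ψ, g x ψ ∂Q ∂μ

variable {P : Measure Ω} {Φ : Ω → Measure G} {μ : Measure G} {Q Q' : Measure (Measure G)}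
  {B : Set G}

theorem IsPalmMeasure.measure_mul_measure (hQ : IsPalmMeasure P Φ μ Q) (hB : MeasurableSet B)
    {A : Set (Measure G)} (hA : MeasurableSet A) :
    μ B * Q A =
      ∫⁻ ω, ∫⁻ x, B.indicator 1 x * A.indicator 1 (shift x (Φ ω)) ∂Φ ω ∂P := by
  have indicator_meas : Measurable (A.indicator (1 : Measure G → ℝ≥0∞)) :=
    measurable_one.indicator hA
  rw [hQ (fun x ψ => B.indicator 1 x * A.indicator 1 ψ)
    (((measurable_one.indicator hB).comp measurable_fst).mul
      (indicator_meas.comp measurable_snd))]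
  simp only [lintegral_const_mul _ indicator_meas, lintegral_indicator_one hA]
  rw [lintegral_mul_const _ (measurable_one.indicator hB), lintegral_indicator_one hB]

theorem IsPalmMeasure.measure_mul_univ (hQ : IsPalmMeasure P Φ μ Q) (hB : MeasurableSet B) :
    μ B * Q univ = ∫⁻ ω, Φ ω B ∂P := by
  rw [hQ.measure_mul_measure hB .univ]
  simp only [indicator_univ, Pi.one_apply, mul_one, lintegral_indicator_one hB]

theorem IsPalmMeasure.unique (hQ : IsPalmMeasure P Φ μ Q) (hQ' : IsPalmMeasure P Φ μ Q')
    (hB : MeasurableSet B) (hB_zero : μ B ≠ 0) (hB_top : μ B ≠ ∞) : Q' = Q := by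
  ext A hA
  refine (ENNReal.mul_right_inj hB_zero hB_top).1 ?_
  rw [hQ.measure_mul_measure hB hA, hQ'.measure_mul_measure hB hA]

theorem IsStationaryRandomMeasure.measurePreserving_shift [MeasurableSub G]
    (hstat : IsStationaryRandomMeasure P Φ) (hΦ : Measurable Φ) (t : G) :
    MeasurePreserving (shift t) (P.map Φ) (P.map Φ) :=
  ⟨measurable_shift t, (Measure.map_map (measurable_shift t) hΦ).trans (hstat t)⟩

variable [TopologicalSpace G] [IsTopologicalAddGroup G] [LocallyCompactSpace G]
  [SecondCountableTopology G] [BorelSpace G]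

theorem lintegral_campbellMeasure_law [SFinite P] (hΦ : Measurable Φ)
    (hfin : ∀ᵐ ω ∂P, IsFiniteMeasureOnCompacts (Φ ω))
    {g : G × Measure G → ℝ≥0∞} (hg : Measurable g) :
    ∫⁻ p, g p ∂campbellMeasure (P.map Φ) (radonKernel G) =
      ∫⁻ ω, ∫⁻ x, g (x, shift x (Φ ω)) ∂Φ ω ∂P := by
  rw [lintegral_campbellMeasure _ _ hg,
    lintegral_map (measurable_lintegral_shift_kernel _ hg) hΦ]
  refine lintegral_congr_ae (hfin.mono fun ω _ => ?_)
  simp only [radonKernel_of_isFiniteMeasureOnCompacts]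

theorem fst_campbellMeasure_law [SFinite P] (hΦ : Measurable Φ)
    (hfin : ∀ᵐ ω ∂P, IsFiniteMeasureOnCompacts (Φ ω)) :
    (campbellMeasure (P.map Φ) (radonKernel G)).fst = P.bind Φ := by
  rw [fst_campbellMeasure, Measure.bind, Measure.map_map (radonKernel G).measurable hΦ]
  exact Measure.bind_congr_right
    (hfin.mono fun ω _ => radonKernel_of_isFiniteMeasureOnCompacts (Φ ω))

end Palm

section PalmExistence

variable {G Ω : Type*} [AddCommGroup G] [MeasurableSpace G] [MeasurableSpace Ω]
  {P : Measure Ω} {Φ : Ω → Measure G} {μ : Measure G} {B : Set G}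

theorem IsStationaryRandomMeasure.isAddLeftInvariant_bind [MeasurableAdd G]
    [MeasurableSub G] (hstat : IsStationaryRandomMeasure P Φ) (hΦ : Measurable Φ) :
    (P.bind Φ).IsAddLeftInvariant := by
  refine ⟨fun t => ?_⟩
  have add_eq_shift : Measure.map (fun x : G => t + x) = shift (-t) := by
    ext1 ψ
    simp only [shift, sub_neg_eq_add, add_comm]
  rw [Measure.bind, ← Measure.join_map_map (measurable_const_add t), add_eq_shift,
    (hstat.measurePreserving_shift hΦ (-t)).map_eq]

variable [TopologicalSpace G] [IsTopologicalAddGroup G] [LocallyCompactSpace G]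
  [SecondCountableTopology G] [BorelSpace G]

theorem IsStationaryRandomMeasure.exists_isPalmMeasure [SFinite P] [SigmaFinite μ]
    [μ.IsAddLeftInvariant] (hstat : IsStationaryRandomMeasure P Φ) (hΦ : Measurable Φ)
    (hB : MeasurableSet B) (hB_int : (interior B).Nonempty) (hB_zero : μ B ≠ 0)
    (hB_top : μ B ≠ ∞) (hfin : ∫⁻ ω, Φ ω B ∂P ≠ ∞) :
    ∃ Q, IsFiniteMeasure Q ∧ IsPalmMeasure P Φ μ Q := by
  rw [← Measure.bind_apply hB hΦ.aemeasurable] at hfin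
  have intensity_invariant := hstat.isAddLeftInvariant_bind hΦ
  have intensity_finite : IsFiniteMeasureOnCompacts (P.bind Φ) :=
    ⟨fun _ => measure_lt_top_of_isCompact_of_isAddLeftInvariant' hB_int hfin⟩
  have Φ_finite := ae_isFiniteMeasureOnCompacts_of_bind hΦ (P := P)
  let C := campbellMeasure (P.map Φ) (radonKernel G)
  have C_fst : C.fst = P.bind Φ := fst_campbellMeasure_law hΦ Φ_finite
  have C_invariant (t : G) : C.map (Prod.map (fun x => t + x) id) = C := by
    simpa only [sub_neg_eq_add, add_comm] using map_sub_campbellMeasure _ (radonKernel G)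
      (hstat.measurePreserving_shift hΦ (-t)) (radonKernel_shift (-t))
  have C_fst_sigmaFinite : SigmaFinite C.fst := C_fst ▸ inferInstance
  obtain ⟨Q, Q_finite, C_eq⟩ :=
    exists_eq_prod_of_map_add_left C_invariant μ hB hB_zero hB_top (C_fst ▸ hfin)
  refine ⟨Q, Q_finite, fun g hg => ?_⟩
  rw [← lintegral_campbellMeasure_law hΦ Φ_finite hg, ← lintegral_prod _ hg.aemeasurable, ← C_eq]

end PalmExistence

section UnitBox

variable (d : ℕ)

theorem measurableSet_unitBox : MeasurableSet (unitBox d) :=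
  .univ_pi fun _ => measurableSet_Ico

theorem volume_unitBox : volume (unitBox d) = 1 := by
  simp [unitBox, volume_pi_pi]

theorem interior_unitBox_nonempty : (interior (unitBox d)).Nonempty := by
  rw [unitBox, interior_pi_set finite_univ]
  exact univ_pi_nonempty_iff.2 fun _ => by simp

end UnitBox

theorem stmt12_general {G Ω : Type*} [AddCommGroup G] [TopologicalSpace G]
    [IsTopologicalAddGroup G] [LocallyCompactSpace G] [SecondCountableTopology G]
    [MeasurableSpace G] [BorelSpace G] (μ : Measure G) [μ.IsAddHaarMeasure]
    [MeasurableSpace Ω] (P : Measure Ω) [SFinite P] (Φ : Ω → Measure G) (hΦ : Measurable Φ)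
    (hstat : IsStationaryRandomMeasure P Φ) {B : Set G} (hB : MeasurableSet B)
    (hB_int : (interior B).Nonempty) (hB_top : μ B ≠ ∞) (hfin : ∫⁻ ω, Φ ω B ∂P ≠ ∞) :
    ∃ Q : Measure (Measure G), IsFiniteMeasure Q ∧ IsPalmMeasure P Φ μ Q ∧
      μ B * Q univ = ∫⁻ ω, Φ ω B ∂P ∧ ∀ Q', IsPalmMeasure P Φ μ Q' → Q' = Q := by
  have hB_zero : μ B ≠ 0 := (Measure.measure_pos_of_nonempty_interior μ hB_int).ne'
  obtain ⟨Q, Q_finite, hQ⟩ := hstat.exists_isPalmMeasure hΦ hB hB_int hB_zero hB_top hfin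
  exact ⟨Q, Q_finite, hQ, hQ.measure_mul_univ hB, fun _ hQ' => hQ.unique hQ' hB hB_zero hB_top⟩

/-- existence and uniqueness of the Palm measure.  Let `Φ` be a stationary
random measure on `ℝ^d` with intensity `λ_Φ = E[Φ([0,1)^d)] ∈ (0,∞)`.  Then there exists a
unique σ-finite measure `Q` on `M(ℝ^d)` such that for every measurable
`g : ℝ^d × M(ℝ^d) → [0,∞]`,
`E[∫ g(x, T_x Φ) dΦ(x)] = ∫_{ℝ^d} ∫ g(x, ψ) dQ(ψ) dx`; moreover `Q` has total mass `λ_Φ`. -/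
theorem stmt12 {d : ℕ} {Ω : Type*} [MeasurableSpace Ω] (P : Measure Ω) [IsProbabilityMeasure P]
    (Φ : Ω → Measure (Vec d)) (hΦm : Measurable Φ)
    (hbf : ∀ᵐ ω ∂P, BddFinite (Φ ω))
    (hstat : ∀ t : Vec d, P.map (fun ω => shiftM t (Φ ω)) = P.map Φ)
    (hpos : 0 < ∫⁻ ω, Φ ω (unitBox d) ∂P)
    (hfin : (∫⁻ ω, Φ ω (unitBox d) ∂P) < ⊤) :
    ∃ Q : Measure (Measure (Vec d)), SigmaFinite Q ∧
      (∀ g : Vec d → Measure (Vec d) → ℝ≥0∞,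
        Measurable (fun p : Vec d × Measure (Vec d) => g p.1 p.2) →
        ∫⁻ ω, (∫⁻ x, g x (shiftM x (Φ ω)) ∂(Φ ω)) ∂P
          = ∫⁻ x, (∫⁻ ψ, g x ψ ∂Q) ∂(volume : Measure (Vec d))) ∧
      Q Set.univ = ∫⁻ ω, Φ ω (unitBox d) ∂P ∧
      ∀ Q' : Measure (Measure (Vec d)), SigmaFinite Q' →
        (∀ g : Vec d → Measure (Vec d) → ℝ≥0∞,
          Measurable (fun p : Vec d × Measure (Vec d) => g p.1 p.2) →
          ∫⁻ ω, (∫⁻ x, g x (shiftM x (Φ ω)) ∂(Φ ω)) ∂P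
            = ∫⁻ x, (∫⁻ ψ, g x ψ ∂Q') ∂(volume : Measure (Vec d))) →
        Q' = Q := by
  obtain ⟨Q, _, hQ, hmass, hunique⟩ := stmt12_general volume P Φ hΦm hstat
    (measurableSet_unitBox d) (interior_unitBox_nonempty d) (by simp [volume_unitBox]) hfin.ne
  exact ⟨Q, inferInstance, hQ, by simpa [volume_unitBox] using hmass, fun Q' _ => hunique Q'⟩
end
end
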